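/- Let p be a prime and let l, m, k be integers with |m| ≥ l > 0 and k > 0. The group H(l,m;k) = ⟨a, t; t⁻¹a⁻ᵏt·aˡ·t⁻¹aᵏt = aᵐ⟩ is residually a finite p-group if and only if |m| = l = p^r and k = p^s for some integers r ≥ 0 and s ≥ 0, and, in the case m = −l, additionally p = 2 and s ≤ r. -/

import Mathlib

/-- A group `X` is *residually a finite p-group* if every non-identity element is excluded
by some normal subgroup of `p`-power index. -/
def ResiduallyPGroup (p : ℕ) (X : Type*) [Group X] : Prop :=
  ∀ x : X, x ≠ 1 → ∃ N : Subgroup X, N.Normal ∧ x ∉ N ∧ ∃ k : ℕ, N.index = p ^ k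

/-- The single relator `(t⁻¹a⁻ᵏt)·aˡ·(t⁻¹aᵏt)·a⁻ᵐ` of the group `H(l,m;k)`,
with `a = FreeGroup.of 0` and `t = FreeGroup.of 1`. -/
def brunnerRels (l m k : ℤ) : Set (FreeGroup (Fin 2)) :=
  {(FreeGroup.of 1)⁻¹ * (FreeGroup.of 0) ^ (-k) * FreeGroup.of 1 * (FreeGroup.of 0) ^ l *
    (FreeGroup.of 1)⁻¹ * (FreeGroup.of 0) ^ k * FreeGroup.of 1 * (FreeGroup.of 0) ^ (-m)}

/-- The group `H(l,m;k) = ⟨a, t; t⁻¹a⁻ᵏt·aˡ·t⁻¹aᵏt = aᵐ⟩`. -/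
def BrunnerGroup (l m k : ℤ) : Type := PresentedGroup (brunnerRels l m k)

instance (l m k : ℤ) : Group (BrunnerGroup l m k) := by delta BrunnerGroup; infer_instance


/-! ### Basic separation notions -/

/-- `s` can be separated from the subgroup `A` in a finite `p`-quotient. -/
def SepFrom (p : ℕ) {G : Type} [Group G] (A : Subgroup G) (s : G) : Prop :=
  ∃ (Q : Type) (_ : Group Q) (_ : Finite Q), IsPGroup p Q ∧ ∃ φ : G →* Q, φ s ∉ A.map φ

/-- Homomorphism version of residual `p`-finiteness. -/
def ResP (p : ℕ) (G : Type) [Group G] : Prop := ∀ g : G, g ≠ 1 → SepFrom p (⊥ : Subgroup G) g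

theorem sepFrom_bot {p : ℕ} {G : Type} [Group G] {s : G} :
    SepFrom p (⊥ : Subgroup G) s ↔
    ∃ (Q : Type) (_ : Group Q) (_ : Finite Q), IsPGroup p Q ∧ ∃ φ : G →* Q, φ s ≠ 1 := by
  simp [SepFrom]

theorem ResP.residually {p : ℕ} [Fact p.Prime] {G : Type} [Group G] (h : ResP p G) :
    ResiduallyPGroup p G := by
  intro x hx
  obtain ⟨Q, _, _, hQ, φ, hφ⟩ := sepFrom_bot.1 (h x hx)
  refine ⟨φ.ker, inferInstance, by simpa [MonoidHom.mem_ker] using hφ, ?_⟩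
  rw [Subgroup.index_ker]
  exact (IsPGroup.iff_card).1 (hQ.to_subgroup _)

theorem SepFrom.comap {p : ℕ} {G H : Type} [Group G] [Group H] (f : G →* H) {A : Subgroup G} {s : G}
    (h : SepFrom p (A.map f) (f s)) : SepFrom p A s := by
  obtain ⟨Q, i1, i2, hQ, φ, hφ⟩ := h
  exact ⟨Q, i1, i2, hQ, φ.comp f, by simpa [Subgroup.map_map] using hφ⟩

theorem IsPGroup.prod' {p : ℕ} {P Q : Type*} [Group P] [Group Q] (hP : IsPGroup p P)
    (hQ : IsPGroup p Q) : IsPGroup p (P × Q) := by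
  rw [isPGroup_iff_pow_pow_eq_one] at *
  rintro ⟨x, y⟩
  obtain ⟨k, hk⟩ := hP x
  obtain ⟨j, hj⟩ := hQ y
  refine ⟨k + j, ?_⟩
  ext
  · simp [pow_add, pow_mul, hk]
  · simp only [Prod.pow_snd, Prod.snd_one]
    rw [add_comm, pow_add, pow_mul, hj, one_pow]

theorem isPGroup_zmod (p M : ℕ) : IsPGroup p (Multiplicative (ZMod (p ^ M))) :=
  IsPGroup.of_card (n := M) ((Nat.card_congr Multiplicative.toAdd).trans (Nat.card_zmod _))

open RegularWreathProduct in
theorem isPGroup_wreath {p : ℕ} [Fact p.Prime] {D Q : Type} [Group D] [Group Q] [Finite D] [Finite Q]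
    (hD : IsPGroup p D) (hQ : IsPGroup p Q) : IsPGroup p (D ≀ᵣ Q) := by
  obtain ⟨n, hn⟩ := IsPGroup.iff_card.1 hD
  obtain ⟨m, hm⟩ := IsPGroup.iff_card.1 hQ
  refine IsPGroup.of_card (n := n * p ^ m + m) ?_
  rw [RegularWreathProduct.card, hn, hm, pow_add, pow_mul]

/-! ### Free groups are residually `p` -/

section Free

/-- Strictly upper triangular matrices as an additive subgroup. -/
def strictUpper (n : ℕ) (R : Type) [CommRing R] : AddSubgroup (Matrix (Fin n) (Fin n) R) where
  carrier := {M | ∀ i j, ¬ i < j → M i j = 0}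
  zero_mem' := by intro i j _; rfl
  add_mem' := by
    intro a b ha hb i j h
    simp [ha i j h, hb i j h]
  neg_mem' := by
    intro a ha i j h
    simp [ha i j h]

theorem strictUpper_mul {n : ℕ} {R : Type} [CommRing R] {M N : Matrix (Fin n) (Fin n) R}
    (hM : M ∈ strictUpper n R) (hN : N ∈ strictUpper n R) : M * N ∈ strictUpper n R := by
  intro i j h
  rw [Matrix.mul_apply]
  apply Finset.sum_eq_zero
  intro k _
  by_cases h1 : i < k
  · by_cases h2 : k < j
    · exact absurd (h1.trans h2) h
    · rw [hN k j h2, mul_zero]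
  · rw [hM i k h1, zero_mul]

/-- Unitriangular matrices. -/
def unitri (n : ℕ) (R : Type) [CommRing R] [Finite R] : Subgroup (Matrix (Fin n) (Fin n) R)ˣ :=
  let S : Submonoid (Matrix (Fin n) (Fin n) R)ˣ :=
  { carrier := {u | (u : Matrix (Fin n) (Fin n) R) - 1 ∈ strictUpper n R}
    one_mem' := by simp [zero_mem]
    mul_mem' := by
      intro a b ha hb
      have : ((a * b : (Matrix (Fin n) (Fin n) R)ˣ) : Matrix (Fin n) (Fin n) R) - 1
        = ((a : Matrix (Fin n) (Fin n) R) - 1) * ((b : Matrix (Fin n) (Fin n) R) - 1)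
          + (((a : Matrix (Fin n) (Fin n) R) - 1) + ((b : Matrix (Fin n) (Fin n) R) - 1)) := by
        push_cast; noncomm_ring
      simp only [Set.mem_ofPred_eq, this]
      exact add_mem (strictUpper_mul ha hb) (add_mem ha hb) }
  { S with
    inv_mem' := by
      intro a ha
      have h : a⁻¹ = a ^ (orderOf a - 1) := by
        have h0 : 0 < orderOf a := orderOf_pos a
        rw [inv_eq_iff_mul_eq_one, ← pow_succ']
        rw [Nat.sub_add_cancel h0, pow_orderOf_eq_one]
      rw [h]
      exact S.pow_mem ha _ }

theorem mem_unitri {n : ℕ} {R : Type} [CommRing R] [Finite R] {u : (Matrix (Fin n) (Fin n) R)ˣ} :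
    u ∈ unitri n R ↔ (u : Matrix (Fin n) (Fin n) R) - 1 ∈ strictUpper n R := Iff.rfl

theorem unitri_isPGroup (p n : ℕ) (R : Type) [CommRing R] [Finite R] (M : ℕ)
    (hR : Nat.card R = p ^ M) : IsPGroup p (unitri n R) := by
  have e : Nat.card (unitri n R) = Nat.card (strictUpper n R) := by
    apply Nat.card_congr
    refine Equiv.ofBijective (fun u => ⟨_, mem_unitri.1 u.2⟩) ⟨?_, ?_⟩
    · intro u v h
      ext1; ext1
      simpa using h
    · rintro ⟨M, hM⟩
      have hdet : (1 + M).det = 1 := by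
        rw [Matrix.det_of_isUpperTriangular]
        · apply Finset.prod_eq_one
          intro i _
          simp [hM i i (lt_irrefl _)]
        · intro i j hij
          simp only [id] at hij
          simp [hM i j (not_lt.2 hij.le), Matrix.one_apply_ne hij.ne']
      have hu : IsUnit (1 + M) := by
        rw [Matrix.isUnit_iff_isUnit_det, hdet]; exact isUnit_one
      obtain ⟨u, hu⟩ := hu
      refine ⟨⟨u, ?_⟩, ?_⟩
      · rw [mem_unitri, hu]; simpa using hM
      · ext1; simp [hu]
  apply IsPGroup.of_card_dvd_pow (n := M * (n * n))
  rw [e]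
  refine (AddSubgroup.card_addSubgroup_dvd_card _).trans ?_
  have : Nat.card (Matrix (Fin n) (Fin n) R) = p ^ (M * (n * n)) := by
    unfold Matrix
    simp [Nat.card_fun, hR, ← pow_mul, mul_assoc]
  rw [this]

/-- Syllable normal form in a free group. -/
theorem free_syllables {X : Type} (f : FreeGroup X) :
    ∃ L : List (X × ℤ), (∀ x ∈ L, x.2 ≠ 0) ∧ L.IsChain (fun a b => a.1 ≠ b.1) ∧
      (L.map fun x => FreeGroup.of x.1 ^ x.2).prod = f := by
  classical
  have step : ∀ (x : X) (e : ℤ) (f : FreeGroup X), (∃ L : List (X × ℤ), (∀ x ∈ L, x.2 ≠ 0) ∧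
      L.IsChain (fun a b => a.1 ≠ b.1) ∧ (L.map fun x => FreeGroup.of x.1 ^ x.2).prod = f) →
      e ≠ 0 → 
      (∃ L : List (X × ℤ), (∀ x ∈ L, x.2 ≠ 0) ∧ L.IsChain (fun a b => a.1 ≠ b.1) ∧
      (L.map fun x => FreeGroup.of x.1 ^ x.2).prod = FreeGroup.of x ^ e * f) := by
    rintro x e f ⟨L, h1, h2, rfl⟩ he
    rcases L with _ | ⟨⟨y, m⟩, L⟩
    · exact ⟨[(x, e)], by simpa using he, by simp, by simp⟩
    · by_cases hxy : x = y
      · subst hxy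
        by_cases hm : e + m = 0
        · refine ⟨L, fun z hz => h1 z (by simp [hz]), h2.tail, ?_⟩
          simp only [List.map_cons, List.prod_cons]
          rw [← mul_assoc, ← zpow_add, hm]; simp
        · refine ⟨(x, e + m) :: L, ?_, ?_, ?_⟩
          · intro z hz
            rcases List.mem_cons.1 hz with rfl | hz
            · exact hm
            · exact h1 z (by simp [hz])
          · rcases L with _ | ⟨w, L⟩
            · simp
            · rw [List.isChain_cons_cons] at h2 ⊢
              exact h2
          · simp only [List.map_cons, List.prod_cons]
            rw [← mul_assoc, ← zpow_add]
      · refine ⟨(x, e) :: (y, m) :: L, ?_, ?_, by simp⟩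
        · intro z hz
          rcases List.mem_cons.1 hz with rfl | hz
          · exact he
          · exact h1 z hz
        · rw [List.isChain_cons_cons]; exact ⟨hxy, h2⟩
  obtain ⟨W, rfl⟩ : ∃ W, FreeGroup.mk W = f := ⟨f.toWord, FreeGroup.mk_toWord⟩
  induction W with
  | nil => exact ⟨[], by simp, by simp, by simp [FreeGroup.one_eq_mk]⟩
  | cons z W ih =>
    obtain ⟨x, b⟩ := z
    have : FreeGroup.mk ((x, b) :: W) = FreeGroup.of x ^ (if b then 1 else -1 : ℤ) * FreeGroup.mk W := by
      cases b
      · simp [FreeGroup.of, FreeGroup.inv_mk, FreeGroup.invRev, FreeGroup.mul_mk]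
      · simp [FreeGroup.of, FreeGroup.mul_mk]
    rw [this]
    exact step x _ _ ih (by cases b <;> simp)

/-- The nilpotent matrix attached to the generator `x`. -/
def nilMat {X : Type} [DecidableEq X] (R : Type) [CommRing R] (L : List (X × ℤ)) (x : X) :
    Matrix (Fin (L.length + 1)) (Fin (L.length + 1)) R :=
  fun i j => if j.val = i.val + 1 ∧ (L[i.val]?).map Prod.fst = some x then 1 else 0

theorem nilMat_sq {X : Type} [DecidableEq X] (R : Type) [CommRing R] (L : List (X × ℤ)) (x : X)
    (hL : L.IsChain (fun a b => a.1 ≠ b.1)) : nilMat R L x * nilMat R L x = 0 := by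
  ext i j
  rw [Matrix.mul_apply]
  apply Finset.sum_eq_zero
  intro k _
  simp only [nilMat]
  split_ifs with h1 h2
  · exfalso
    obtain ⟨h1, h1'⟩ := h1
    obtain ⟨h2, h2'⟩ := h2
    rw [List.isChain_iff_getElem] at hL
    simp only [Option.map_eq_some_iff] at h1' h2'
    obtain ⟨u, hu, hux⟩ := h1'
    obtain ⟨v, hv, hvx⟩ := h2'
    rw [List.getElem?_eq_some_iff] at hu hv
    obtain ⟨hi, hu⟩ := hu
    obtain ⟨hk, hv⟩ := hv
    have := hL i.val (by omega)
    apply this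
    rw [hu, hux, ← hvx, ← hv]
    simp [h1]
  all_goals simp

theorem nilMat_mem {X : Type} [DecidableEq X] (R : Type) [CommRing R] (L : List (X × ℤ)) (x : X) :
    nilMat R L x ∈ strictUpper _ R := by
  intro i j hij
  simp only [nilMat]
  rw [if_neg]
  rintro ⟨h, _⟩
  apply hij
  rw [Fin.lt_def]; omega

/-- `1 + m N` for `N` of square zero. -/
def sqZeroHom {R : Type} [Ring R] (N : R) (h : N * N = 0) : Multiplicative ℤ →* Rˣ :=
  MonoidHom.mk' (fun m => ⟨1 + (m.toAdd : R) * N, 1 - (m.toAdd : R) * N, by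
      have : (m.toAdd : R) * N * ((m.toAdd : R) * N) = 0 := by
        rw [mul_assoc, ← mul_assoc N, ← (Int.cast_commute _ N).eq, mul_assoc, h]; simp
      rw [mul_sub, add_mul 1 _ (_ * N), this]; simp, by
      have : (m.toAdd : R) * N * ((m.toAdd : R) * N) = 0 := by
        rw [mul_assoc, ← mul_assoc N, ← (Int.cast_commute _ N).eq, mul_assoc, h]; simp
      rw [sub_mul, mul_add, mul_add, this]; simp⟩) (by
    intro a b
    ext
    simp only [Units.val_mul, toAdd_mul, Int.cast_add]
    have : (a.toAdd : R) * N * ((b.toAdd : R) * N) = 0 := by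
        rw [mul_assoc, ← mul_assoc N, ← (Int.cast_commute _ N).eq, mul_assoc, h]; simp
    rw [mul_add, add_mul, add_mul 1 _ (_ * N), this]; simp [add_assoc])

theorem sqZeroHom_pow {R : Type} [Ring R] (N : R) (h : N * N = 0) (m : ℤ) :
    ((sqZeroHom N h (Multiplicative.ofAdd 1) ^ m : Rˣ) : R) = 1 + (m : R) * N := by
  rw [← map_zpow, ← ofAdd_zsmul]
  simp [sqZeroHom]

theorem free_resP (p : ℕ) [Fact p.Prime] (X : Type) : ResP p (FreeGroup X) := by
  classical
  intro f hf
  rw [sepFrom_bot]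
  obtain ⟨L, h0, hc, rfl⟩ := free_syllables f
  set D : ℤ := (L.map Prod.snd).prod with hD
  have hD0 : D ≠ 0 := by
    rw [hD]; intro h
    rw [List.prod_eq_zero_iff] at h
    obtain ⟨z, hz, hz0⟩ := List.mem_map.1 h
    exact h0 z hz hz0
  obtain ⟨M, hM⟩ : ∃ M, D.natAbs < p ^ M :=
    ⟨_, Nat.lt_pow_self (Fact.out : p.Prime).one_lt⟩
  have : NeZero (p ^ M) := ⟨(pow_pos (Fact.out : p.Prime).pos M).ne'⟩
  let R := ZMod (p ^ M)
  have hDR : (D : R) ≠ 0 := by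
    intro h
    rw [ZMod.intCast_zmod_eq_zero_iff_dvd] at h
    have := Int.natAbs_dvd_natAbs.2 h
    simp only [Int.natAbs_natCast] at this
    exact absurd (Nat.le_of_dvd (Int.natAbs_pos.2 hD0) this) (by omega)
  let g : X → unitri (L.length + 1) R := fun x =>
    ⟨sqZeroHom (nilMat R L x) (nilMat_sq R L x hc) (Multiplicative.ofAdd 1), by
      rw [mem_unitri]; simpa [sqZeroHom] using nilMat_mem R L x⟩
  refine ⟨unitri (L.length + 1) R, inferInstance, inferInstance,
    unitri_isPGroup p _ R M (by simp [R]), FreeGroup.lift g, ?_⟩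
  have key : ∀ (L1 L2 : List (X × ℤ)) (h : L1 ++ L2 = L),
      let P : Matrix (Fin (L.length + 1)) (Fin (L.length + 1)) R :=
        (((FreeGroup.lift g (L1.map fun x => FreeGroup.of x.1 ^ x.2).prod :
          (unitri (L.length + 1) R)) : (Matrix (Fin (L.length + 1)) (Fin (L.length + 1)) R)ˣ) :
          Matrix (Fin (L.length + 1)) (Fin (L.length + 1)) R)
      (∀ j, L1.length < j.val → P 0 j = 0) ∧
      ∀ j, j.val = L1.length → P 0 j = ((L1.map Prod.snd).prod : ℤ) := by
    intro L1
    induction L1 using List.reverseRecOn with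
    | nil =>
      intro L2 h
      refine ⟨?_, ?_⟩
      · intro j hj
        have : (0 : Fin (L.length + 1)) ≠ j := by
          rintro rfl; simp at hj
        simp [Matrix.one_apply_ne this]
      · intro j hj
        have : j = 0 := by ext; simpa using hj
        subst this; simp
    | append_singleton L1 z ih =>
      intro L2 h
      have hz := ih (z :: L2) (by simpa using h)
      obtain ⟨hz1, hz2⟩ := hz
      have hlen : L1.length < L.length := by rw [← h]; simp
      have hLz : L[L1.length]? = some z := by rw [← h]; simp
      intro P
      set P' : Matrix (Fin (L.length + 1)) (Fin (L.length + 1)) R :=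
        (((FreeGroup.lift g (L1.map fun x => FreeGroup.of x.1 ^ x.2).prod :
          (unitri (L.length + 1) R)) : (Matrix (Fin (L.length + 1)) (Fin (L.length + 1)) R)ˣ) :
          Matrix (Fin (L.length + 1)) (Fin (L.length + 1)) R) with hP'
      have hP : P = P' * (1 + (z.2 : Matrix (Fin (L.length + 1)) (Fin (L.length + 1)) R) * nilMat R L z.1) := by
        rw [← sqZeroHom_pow (nilMat R L z.1) (nilMat_sq R L z.1 hc)]
        simp [P, hP', g]
      have hP2 : ∀ j, P 0 j = P' 0 j + z.2 * ∑ k, P' 0 k * nilMat R L z.1 k j := by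
        intro j
        rw [hP, mul_add, mul_one, ← mul_assoc, ← (Int.cast_commute z.2 P').eq, mul_assoc,
          ← zsmul_eq_mul, Matrix.add_apply, Matrix.smul_apply, Matrix.mul_apply, zsmul_eq_mul]
      refine ⟨?_, ?_⟩
      · intro j hj
        simp only [List.length_append, List.length_singleton] at hj
        rw [hP2, hz1 j (by omega), Finset.sum_eq_zero]
        · simp
        · intro k _
          by_cases hk : L1.length < k.val
          · rw [hz1 k hk, zero_mul]
          · simp only [nilMat]
            rw [if_neg, mul_zero]
            rintro ⟨h, _⟩; omega
      · intro j hj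
        simp only [List.length_append, List.length_singleton] at hj
        rw [hP2, hz1 j (by omega)]
        rw [Finset.sum_eq_single (⟨L1.length, by omega⟩ : Fin (L.length + 1))]
        · rw [hz2 _ rfl]
          rw [List.map_append, List.prod_append, Int.cast_mul]
          simp [nilMat, hj, hLz, mul_comm]
        · intro k _ hk
          simp only [nilMat]
          rw [if_neg, mul_zero]
          rintro ⟨h, _⟩
          apply hk; ext; simp; omega
        · simp
  intro h1
  have h2 := (key L [] (by simp)).2 (Fin.last _) (by simp)
  rw [h1] at h2
  simp only [OneMemClass.coe_one, Units.val_one] at h2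
  rcases L with _ | ⟨z, L⟩
  · simp at hf
  · rw [Matrix.one_apply_ne (by simp [Fin.ext_iff])] at h2
    exact hDR h2.symm

end Free


/-! ### The HNN criterion -/

section HNN

theorem sep_common {p : ℕ} {G : Type} [Group G] (l : List (Subgroup G × G))
    (h : ∀ z ∈ l, SepFrom p z.1 z.2) :
    ∃ (Q : Type) (_ : Group Q) (_ : Finite Q), IsPGroup p Q ∧ ∃ φ : G →* Q,
      ∀ z ∈ l, φ z.2 ∉ z.1.map φ := by
  induction l with
  | nil => exact ⟨Unit, inferInstance, inferInstance, IsPGroup.of_subsingleton _ _, 1, by simp⟩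
  | cons z l ih =>
    obtain ⟨Q, _, _, hQ, φ, hφ⟩ := ih (fun y hy => h y (by simp [hy]))
    obtain ⟨P, _, _, hP, ψ, hψ⟩ := h z (by simp)
    refine ⟨P × Q, inferInstance, inferInstance, hP.prod' hQ, ψ.prod φ, ?_⟩
    intro y hy hmem
    obtain ⟨u, hu, hu'⟩ := hmem
    simp only [MonoidHom.prod_apply, Prod.mk.injEq] at hu'
    rcases List.mem_cons.1 hy with rfl | hy
    · exact hψ ⟨u, hu, hu'.1⟩
    · exact hφ y hy ⟨u, hu, hu'.2⟩

variable {G : Type} [Group G]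

/-- The value of the word with syllables `t ^ e * g`. -/
def wordVal (t : G) (L : List (Bool × G)) : G :=
  (L.map fun x => (if x.1 then t else t⁻¹) * x.2).prod

/-- No pinches. -/
def HRed (A B : Subgroup G) (L : List (Bool × G)) : Prop :=
  L.IsChain fun x y => x.2 ∈ (if x.1 then B else A) → x.1 = y.1

theorem exists_reduced (S A B : Subgroup G) (t : G) (hgen : Subgroup.closure (S ∪ {t} : Set G) = ⊤)
    (hA : A ≤ S) (hB : B ≤ S) (hAB : ∀ x, x ∈ A ↔ t⁻¹ * x * t ∈ B) (g : G) :
    ∃ g0 ∈ S, ∃ L : List (Bool × G), (∀ x ∈ L, x.2 ∈ S) ∧ HRed A B L ∧ g = g0 * wordVal t L := by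
  have hBA : ∀ x, x ∈ B ↔ t * x * t⁻¹ ∈ A := by
    intro x; rw [hAB]; simp [mul_assoc]
  have stepS : ∀ s ∈ S, ∀ g, (∃ g0 ∈ S, ∃ L : List (Bool × G), (∀ x ∈ L, x.2 ∈ S) ∧ HRed A B L ∧
      g = g0 * wordVal t L) → (∃ g0 ∈ S, ∃ L : List (Bool × G), (∀ x ∈ L, x.2 ∈ S) ∧ HRed A B L ∧
      s * g = g0 * wordVal t L) := by
    rintro s hs g ⟨g0, h0, L, h1, h2, rfl⟩
    exact ⟨s * g0, mul_mem hs h0, L, h1, h2, by group⟩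
  have stepT : ∀ e : Bool, ∀ g, (∃ g0 ∈ S, ∃ L : List (Bool × G), (∀ x ∈ L, x.2 ∈ S) ∧ HRed A B L ∧
      g = g0 * wordVal t L) → (∃ g0 ∈ S, ∃ L : List (Bool × G), (∀ x ∈ L, x.2 ∈ S) ∧ HRed A B L ∧
      (if e then t else t⁻¹) * g = g0 * wordVal t L) := by
    rintro e g ⟨g0, h0, L, h1, h2, rfl⟩
    rcases L with _ | ⟨⟨f, g1⟩, L⟩
    · exact ⟨1, one_mem _, [(e, g0)], by simpa using h0, by simp [HRed], by simp [wordVal]⟩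
    · by_cases hc : g0 ∈ (if e then B else A) → e = f
      · refine ⟨1, one_mem _, (e, g0) :: (f, g1) :: L, ?_, ?_, by simp [wordVal, mul_assoc]⟩
        · intro x hx
          rcases List.mem_cons.1 hx with rfl | hx
          · exact h0
          · exact h1 x hx
        · unfold HRed at *
          rw [List.isChain_cons_cons]; exact ⟨hc, h2⟩
      · push Not at hc
        obtain ⟨hc1, hc2⟩ := hc
        have hg1 : g1 ∈ S := h1 (f, g1) (by simp)
        refine ⟨(if e then t else t⁻¹) * g0 * (if f then t else t⁻¹) * g1, ?_, L,
          fun x hx => h1 x (by simp [hx]), h2.tail, by simp [wordVal, mul_assoc]⟩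
        refine mul_mem ?_ hg1
        cases e <;> cases f
        · exact absurd rfl hc2
        · have := hB ((hAB g0).1 (by simpa using hc1))
          simpa using this
        · have := hA ((hBA g0).1 (by simpa using hc1))
          simpa using this
        · exact absurd rfl hc2
  have hmem : g ∈ Subgroup.closure (S ∪ {t} : Set G) := by rw [hgen]; trivial
  induction hmem using Subgroup.closure_induction_left with
  | one => exact ⟨1, one_mem _, [], by simp, by simp [HRed], by simp [wordVal]⟩
  | mul_left x hx y hy ih =>
    rcases hx with hx | hx
    · exact stepS x hx y ih
    · rw [Set.mem_singleton_iff] at hx; subst hx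
      exact stepT true y ih
  | inv_mul_cancel x hx y hy ih =>
    rcases hx with hx | hx
    · exact stepS x⁻¹ (inv_mem hx) y ih
    · rw [Set.mem_singleton_iff] at hx; subst hx
      exact stepT false y ih

/-- The word in the free group on the cosets. -/
def cosetWord {Q : Type} [Group Q] (A' : Subgroup Q) (τ : Q) (φ : G →* Q) :
    Q → List (Bool × G) → List ((Q ⧸ A') × Bool)
  | _, [] => []
  | q, (e, g) :: L => (((q * (if e then 1 else τ⁻¹) : Q) : Q ⧸ A'), e) ::
      cosetWord A' τ φ (q * (if e then τ else τ⁻¹) * φ g) L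

theorem cosetWord_reduced {Q : Type} [Group Q] {A B : Subgroup G} {t : G} (φ : G →* Q)
    (hAB : ∀ x, x ∈ A ↔ t⁻¹ * x * t ∈ B)
    (L : List (Bool × G)) (hL : HRed A B L)
    (hs : ∀ x ∈ L, (x.2 ∉ A → φ x.2 ∉ A.map φ) ∧ (x.2 ∉ B → φ x.2 ∉ B.map φ)) (q : Q) :
    FreeGroup.IsReduced (cosetWord (A.map φ) (φ t) φ q L) := by
  induction L generalizing q with
  | nil => simp [cosetWord]
  | cons x L ih =>
    obtain ⟨e, g⟩ := x
    have ih' := ih hL.tail (fun x hx => hs x (by simp [hx]))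
    rcases L with _ | ⟨⟨f, g1⟩, L⟩
    · simp [cosetWord]
    · have h2 := ih' (q * (if e then φ t else (φ t)⁻¹) * φ g)
      simp only [cosetWord] at h2 ⊢
      rw [FreeGroup.isReduced_cons_cons]
      refine ⟨?_, h2⟩
      unfold HRed at hL
      rw [List.isChain_cons_cons] at hL
      obtain ⟨hc, -⟩ := hL
      have hg := hs (e, g) (by simp)
      intro heq
      rw [QuotientGroup.eq] at heq
      cases e <;> cases f
      · rfl
      · apply hc
        by_contra h
        apply hg.1 (by simpa using h)
        simpa [mul_assoc] using heq
      · apply hc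
        by_contra h
        apply hg.2 (by simpa using h)
        have h3 : φ t * φ g * (φ t)⁻¹ ∈ A.map φ := by simpa [mul_assoc] using heq
        obtain ⟨x, hx, hx'⟩ := h3
        refine ⟨t⁻¹ * x * t, (hAB x).1 hx, ?_⟩
        rw [map_mul, map_mul, hx', map_inv]; group
      · rfl

end HNN


section HNN2

open RegularWreathProduct

theorem hnn_resP {p : ℕ} [Fact p.Prime] {G : Type} [Group G] (S A B : Subgroup G) (t : G)
    (hgen : Subgroup.closure (S ∪ {t} : Set G) = ⊤)
    (hA : A ≤ S) (hB : B ≤ S) (hAB : ∀ x, x ∈ A ↔ t⁻¹ * x * t ∈ B)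
    (hlift : ∀ (E : Type) [Group E] (φ : G →* E) (v : E), (∀ x ∈ A, v * φ x = φ x * v) →
      ∃ φ' : G →* E, (∀ s ∈ S, φ' s = φ s) ∧ φ' t = v * φ t)
    (h1 : ∀ s ∈ S, s ∉ A → SepFrom p A s) (h2 : ∀ s ∈ S, s ∉ B → SepFrom p B s)
    (h3 : ∀ s ∈ S, s ≠ 1 → SepFrom p ⊥ s) : ResP p G := by
  classical
  intro g hg
  obtain ⟨g0, hg0, L, hLS, hLR, rfl⟩ := exists_reduced S A B t hgen hA hB hAB g
  by_cases hL : L = []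
  · subst hL
    simp only [wordVal, List.map_nil, List.prod_nil, mul_one] at hg ⊢
    exact h3 _ hg0 hg
  obtain ⟨Q, _, _, hQ, φ, hφ⟩ := sep_common (p := p)
    ((L.filter (fun x => x.2 ∉ A)).map (fun x => (A, x.2)) ++
      (L.filter (fun x => x.2 ∉ B)).map (fun x => (B, x.2))) (by
      intro z hz
      rcases List.mem_append.1 hz with hz | hz
      · obtain ⟨x, hx, rfl⟩ := List.mem_map.1 hz
        rw [List.mem_filter] at hx
        exact h1 _ (hLS x hx.1) (by simpa using hx.2)
      · obtain ⟨x, hx, rfl⟩ := List.mem_map.1 hz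
        rw [List.mem_filter] at hx
        exact h2 _ (hLS x hx.1) (by simpa using hx.2))
  have hsep : ∀ x ∈ L, (x.2 ∉ A → φ x.2 ∉ A.map φ) ∧ (x.2 ∉ B → φ x.2 ∉ B.map φ) := by
    intro x hx
    constructor
    · intro h
      exact hφ (A, x.2) (List.mem_append_left _
        (List.mem_map.2 ⟨x, List.mem_filter.2 ⟨hx, by simpa using h⟩, rfl⟩))
    · intro h
      exact hφ (B, x.2) (List.mem_append_right _
        (List.mem_map.2 ⟨x, List.mem_filter.2 ⟨hx, by simpa using h⟩, rfl⟩))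
  have hred := cosetWord_reduced φ hAB L hLR hsep 1
  have hne : FreeGroup.mk (cosetWord (A.map φ) (φ t) φ 1 L) ≠ 1 := by
    intro h
    have h' := congrArg FreeGroup.toWord h
    rw [FreeGroup.toWord_mk, hred.reduce_eq, FreeGroup.toWord_one] at h'
    rcases L with _ | ⟨⟨e, g⟩, L⟩
    · exact hL rfl
    · simp [cosetWord] at h'
  obtain ⟨P, _, _, hP, ψ, hψ⟩ := sepFrom_bot.1 (free_resP p (Q ⧸ A.map φ) _ hne)
  let v : P ≀ᵣ Q := ⟨fun x => ψ (FreeGroup.of ((x⁻¹ : Q) : Q ⧸ A.map φ)), 1⟩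
  obtain ⟨φ', hS, ht⟩ := hlift (P ≀ᵣ Q) ((inl : Q →* P ≀ᵣ Q).comp φ) v (by
    intro x hx
    ext y
    · simp only [v, MonoidHom.comp_apply, mul_left, left_inl, right_inl, Pi.mul_apply, Pi.one_apply,
        mul_one, one_mul, mul_inv_rev, inv_inv]
      congr 2
      rw [QuotientGroup.eq]
      simpa using ⟨x, hx, rfl⟩
    · simp [v])
  refine sepFrom_bot.2 ⟨P ≀ᵣ Q, inferInstance, inferInstance, isPGroup_wreath hP hQ, φ', ?_⟩
  have key : ∀ (L : List (Bool × G)), (∀ x ∈ L, x.2 ∈ S) → ∀ q : Q,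
      (φ' (wordVal t L)).left q⁻¹ = ψ (FreeGroup.mk (cosetWord (A.map φ) (φ t) φ q L)) := by
    intro L
    induction L with
    | nil => intro _ q; simp [wordVal, cosetWord, ← FreeGroup.one_eq_mk]
    | cons x L ih =>
      obtain ⟨e, g⟩ := x
      intro hx q
      have hgS := hS g (hx (e, g) (by simp))
      have ih' := ih (fun x h => hx x (by simp [h]))
      have e1 : wordVal t ((e, g) :: L) = (if e then t else t⁻¹) * g * wordVal t L := by
        simp [wordVal]
      have e2 : ∀ (c : Q ⧸ A.map φ) (b : Bool) L', FreeGroup.mk ((c, b) :: L') =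
          FreeGroup.mk [(c, b)] * FreeGroup.mk L' := by
        intro c b L'; rw [FreeGroup.mul_mk]; rfl
      rw [e1, map_mul, map_mul, hgS, cosetWord, e2, map_mul]
      cases e
      · have := ih' (q * (φ t)⁻¹ * φ g)
        simp only [Bool.false_eq_true, if_false, map_inv, ht]
        rw [← this]
        have e3 : (FreeGroup.mk [(((q * (φ t)⁻¹ : Q) : Q ⧸ A.map φ), false)]) =
          (FreeGroup.of ((q * (φ t)⁻¹ : Q) : Q ⧸ A.map φ))⁻¹ := by
          simp [FreeGroup.of, FreeGroup.inv_mk, FreeGroup.invRev]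
        rw [e3, map_inv]
        simp [v, mul_assoc]
      · have := ih' (q * φ t * φ g)
        simp only [if_true, ht, mul_one]
        rw [← this]
        have e3 : (FreeGroup.mk [((q : Q ⧸ A.map φ), true)]) =
          (FreeGroup.of (q : Q ⧸ A.map φ)) := rfl
        rw [e3]
        simp [v, mul_assoc]
  intro h
  apply hψ
  rw [← key L hLS 1]
  rw [map_mul, hS g0 hg0] at h
  have := congrArg (fun w => RegularWreathProduct.left w (φ g0)) h
  simpa using this

end HNN2


/-! ### Baumslag-Solitar groups -/

section BS

theorem sep_zpowers {p : ℕ} {Γ : Type} [Group Γ] (hΓ : ResP p Γ) (c g : Γ) (i : ℤ) (s : ℕ)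
    (hε : ∀ M : ℕ, ∃ (Q : Type) (_ : Group Q) (_ : Finite Q), IsPGroup p Q ∧ ∃ ε : Γ →* Q,
      ε g = ε c ^ i ∧ p ^ M ∣ orderOf (ε c))
    (hg : g ∉ Subgroup.zpowers (c ^ (p ^ s))) : SepFrom p (Subgroup.zpowers (c ^ (p ^ s))) g := by
  by_cases hi : ((p ^ s : ℕ) : ℤ) ∣ i
  · have hne : g * c ^ (-i) ≠ 1 := by
      intro h
      apply hg
      obtain ⟨j, rfl⟩ := hi
      refine ⟨j, ?_⟩
      rw [zpow_neg, mul_inv_eq_one] at h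
      rw [h]
      simp only
      rw [zpow_mul, zpow_natCast]
    obtain ⟨Q, _, _, hQ, φ, hφ⟩ := sepFrom_bot.1 (hΓ _ hne)
    rw [isPGroup_iff_pow_pow_eq_one] at hQ
    obtain ⟨M, hM⟩ := hQ (φ c)
    rw [← isPGroup_iff_pow_pow_eq_one] at hQ
    obtain ⟨P, _, _, hP, ε, hε1, hε2⟩ := hε M
    refine ⟨Q × P, inferInstance, inferInstance, hQ.prod' hP, φ.prod ε, ?_⟩
    rintro ⟨u, hu, hu'⟩
    obtain ⟨j, rfl⟩ := hu
    simp only [MonoidHom.prod_apply, Prod.mk.injEq] at hu'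
    obtain ⟨e1, e2⟩ := hu'
    rw [hε1, map_zpow, map_pow, ← zpow_natCast, ← zpow_mul] at e2
    rw [zpow_eq_zpow_iff_modEq] at e2
    have e3 := e2.of_dvd (Int.natCast_dvd_natCast.2 (orderOf_dvd_of_pow_eq_one hM |>.trans hε2))
    rw [← zpow_eq_zpow_iff_modEq] at e3
    apply hφ
    rw [map_mul, ← e1, map_zpow, map_zpow, map_pow, ← zpow_natCast, ← zpow_mul, e3, ← zpow_add]
    simp
  · obtain ⟨P, i1, i2, hP, ε, hε1, hε2⟩ := hε s
    refine ⟨P, i1, i2, hP, ε, ?_⟩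
    rintro ⟨u, hu, hu'⟩
    obtain ⟨j, rfl⟩ := hu
    rw [hε1, map_zpow, map_pow, ← zpow_natCast, ← zpow_mul, zpow_eq_zpow_iff_modEq] at hu'
    have e3 := hu'.of_dvd (Int.natCast_dvd_natCast.2 hε2)
    apply hi
    have := e3.dvd
    exact (dvd_sub_left (dvd_mul_right _ j)).1 this

/-- Relator of the Baumslag-Solitar group. -/
def bsRels (l m : ℤ) : Set (FreeGroup (Fin 2)) :=
  {(FreeGroup.of 1)⁻¹ * (FreeGroup.of 0) ^ l * FreeGroup.of 1 * (FreeGroup.of 0) ^ (-m)}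

/-- Baumslag-Solitar group. -/
abbrev BS (l m : ℤ) : Type := PresentedGroup (bsRels l m)

/-- The generator `a`. -/
def BS.a (l m : ℤ) : BS l m := PresentedGroup.of 0

/-- The generator `b`. -/
def BS.b (l m : ℤ) : BS l m := PresentedGroup.of 1

theorem BS.rel (l m : ℤ) : (BS.b l m)⁻¹ * BS.a l m ^ l * BS.b l m = BS.a l m ^ m := by
  have h := PresentedGroup.one_of_mem (rels := bsRels l m) (Set.mem_singleton _)
  simp only [map_mul, map_inv, map_zpow] at h
  rw [zpow_neg, mul_inv_eq_one] at h
  exact h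

theorem BS.exists_lift {l m : ℤ} {E : Type} [Group E] (α β : E) (h : β⁻¹ * α ^ l * β = α ^ m) :
    ∃ f : BS l m →* E, f (BS.a l m) = α ∧ f (BS.b l m) = β := by
  have hr : ∀ r ∈ bsRels l m, FreeGroup.lift ![α, β] r = 1 := by
    intro r hr
    rw [bsRels, Set.mem_singleton_iff] at hr
    subst hr
    simp [h]
  refine ⟨PresentedGroup.toGroup hr, ?_, ?_⟩
  · simp [BS.a]
  · simp [BS.b]

theorem BS.closure (l m : ℤ) : Subgroup.closure {BS.a l m, BS.b l m} = ⊤ := by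
  rw [← PresentedGroup.closure_range_of (bsRels l m)]
  congr 1
  ext x
  constructor
  · rintro (rfl | rfl)
    · exact ⟨0, rfl⟩
    · exact ⟨1, rfl⟩
  · rintro ⟨i, rfl⟩
    fin_cases i
    · left; rfl
    · right; rfl

theorem conj_mem_zpowers {G : Type} [Group G] (x y t : G) :
    x ∈ Subgroup.zpowers y ↔ t⁻¹ * x * t ∈ Subgroup.zpowers (t⁻¹ * y * t) := by
  have : ∀ i : ℤ, (t⁻¹ * y * t) ^ i = t⁻¹ * y ^ i * t := by
    intro i
    have := conj_zpow (i := i) (a := t⁻¹) (b := y)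
    simpa using this
  simp [Subgroup.mem_zpowers_iff, this]

theorem ofAdd_pow_dvd (N : ℕ) (i : ℤ) :
    (Multiplicative.ofAdd (1 : ZMod N)) ^ i = 1 ↔ (N : ℤ) ∣ i := by
  rw [← orderOf_dvd_iff_zpow_eq_one, orderOf_ofAdd_eq_addOrderOf, ZMod.addOrderOf_one]

theorem isPGroup_dihedral (M : ℕ) : IsPGroup 2 (DihedralGroup (2 ^ M)) :=
  IsPGroup.of_card (n := M + 1) (by rw [DihedralGroup.nat_card]; ring)

theorem not_dvd_big (p : ℕ) [hp : Fact p.Prime] (i : ℤ) (hi : i ≠ 0) :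
    ∃ M : ℕ, ¬ ((p ^ M : ℕ) : ℤ) ∣ i := by
  refine ⟨i.natAbs, fun h => ?_⟩
  rw [Int.natCast_dvd] at h
  have := Nat.le_of_dvd (by omega) h
  have := Nat.lt_pow_self hp.out.one_lt (n := i.natAbs)
  omega

theorem dihedral_rel (N : ℕ) (n : ℤ) : (DihedralGroup.sr (0 : ZMod N))⁻¹ * (DihedralGroup.r 1) ^ n *
    DihedralGroup.sr 0 = (DihedralGroup.r 1) ^ (-n) := by
  have : (DihedralGroup.sr (0 : ZMod N))⁻¹ * (DihedralGroup.r 1)  *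
    DihedralGroup.sr 0 = (DihedralGroup.r 1)⁻¹ := by simp
  have h := conj_zpow (i := n) (a := (DihedralGroup.sr (0 : ZMod N))⁻¹) (b := DihedralGroup.r 1)
  rw [inv_inv] at h
  rw [← h, this, inv_zpow, zpow_neg]

/-- The good sign condition. -/
def GoodSign (p : ℕ) (l m : ℤ) : Prop := m = l ∨ (m = -l ∧ p = 2)

theorem bs_resP {p : ℕ} [Fact p.Prime] (r : ℕ) (m : ℤ) (h : GoodSign p ((p ^ r : ℕ) : ℤ) m) :
    ResP p (BS ((p ^ r : ℕ) : ℤ) m) := by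
  set n : ℤ := ((p ^ r : ℕ) : ℤ) with hn
  set a := BS.a n m with ha
  set b := BS.b n m with hb
  have hrel : b⁻¹ * a ^ n * b = a ^ m := BS.rel n m
  have hz : Subgroup.zpowers (a ^ m) = Subgroup.zpowers (a ^ n) := by
    have : ∀ q : ℤ, (q = n ∨ (q = -n ∧ p = 2)) →
        Subgroup.zpowers (a ^ q) = Subgroup.zpowers (a ^ n) := by
      rintro q (h | h)
      · rw [h]
      · rw [h.1, zpow_neg, Subgroup.zpowers_inv]
    exact this m h
  have hsep : ∀ s ∈ Subgroup.zpowers a, s ∉ Subgroup.zpowers (a ^ n) →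
      SepFrom p (Subgroup.zpowers (a ^ n)) s := by
    rintro _ ⟨i, rfl⟩ hs
    have hα : ∀ j : ℤ, (Multiplicative.ofAdd (1 : ZMod (p ^ r))) ^ (n * j) = 1 := by
      intro j; rw [ofAdd_pow_dvd]; exact dvd_mul_right _ _
    obtain ⟨f, fa, fb⟩ := BS.exists_lift (l := n) (m := m)
      (Multiplicative.ofAdd (1 : ZMod (p ^ r))) 1 (by
      have h1 := hα 1
      have h2 := hα (-1)
      rw [mul_one] at h1
      rw [mul_neg_one] at h2
      rcases h with h | h
      · rw [h, h1]; simp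
      · rw [h.1, h1, h2]; simp)
    have : NeZero (p ^ r) := ⟨pow_ne_zero _ (Fact.out : p.Prime).ne_zero⟩
    have : Finite (Multiplicative (ZMod (p ^ r))) := inferInstanceAs (Finite (ZMod (p ^ r)))
    refine ⟨_, inferInstance, inferInstance, isPGroup_zmod p r, f, ?_⟩
    rintro ⟨u, ⟨j, rfl⟩, hu⟩
    simp only [map_zpow] at hu
    rw [fa, ← zpow_mul, hα, eq_comm, ofAdd_pow_dvd] at hu
    obtain ⟨j, rfl⟩ := hu
    exact hs ⟨j, by simp only; rw [zpow_mul]⟩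
  refine hnn_resP (Subgroup.zpowers a) (Subgroup.zpowers (a ^ n)) (Subgroup.zpowers (a ^ n)) b
    ?_ ?_ ?_ ?_ ?_ hsep hsep ?_
  · rw [eq_top_iff, ← BS.closure, Subgroup.closure_le]
    rintro x (rfl | rfl)
    · exact Subgroup.subset_closure (Or.inl (Subgroup.mem_zpowers a))
    · exact Subgroup.subset_closure (Or.inr rfl)
  · rw [Subgroup.zpowers_le]; exact ⟨n, rfl⟩
  · rw [Subgroup.zpowers_le]; exact ⟨n, rfl⟩
  · intro x
    rw [conj_mem_zpowers x (a ^ n) b, hrel, hz]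
  · intro E _ φ v hv
    obtain ⟨f, fa, fb⟩ := BS.exists_lift (l := n) (m := m) (φ a) (v * φ b) (by
      have h1 := hv (a ^ n) (Subgroup.mem_zpowers _)
      rw [map_zpow] at h1
      have h2 := congrArg φ hrel
      simp only [map_mul, map_inv, map_zpow] at h2
      rw [← h2, mul_inv_rev]
      have h3 : v⁻¹ * φ a ^ n * v = φ a ^ n := by rw [mul_assoc, ← h1]; group
      calc (φ b)⁻¹ * v⁻¹ * φ a ^ n * (v * φ b) = (φ b)⁻¹ * (v⁻¹ * φ a ^ n * v) * φ b := by group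
        _ = _ := by rw [h3])
    refine ⟨f, ?_, fb⟩
    rintro _ ⟨i, rfl⟩
    simp only [map_zpow, ha] at *
    rw [fa]
  · rintro _ ⟨i, rfl⟩ hi
    have hi0 : i ≠ 0 := by rintro rfl; simp at hi
    obtain ⟨M, hM⟩ := not_dvd_big p i hi0
    have : NeZero (p ^ M) := ⟨pow_ne_zero _ (Fact.out : p.Prime).ne_zero⟩
    have : Finite (Multiplicative (ZMod (p ^ M))) := inferInstanceAs (Finite (ZMod (p ^ M)))
    rw [sepFrom_bot]
    rcases h with h | ⟨h, h2⟩
    · obtain ⟨f, fa, fb⟩ := BS.exists_lift (l := n) (m := m)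
        (Multiplicative.ofAdd (1 : ZMod (p ^ M))) 1 (by rw [h]; simp)
      refine ⟨_, inferInstance, inferInstance, isPGroup_zmod p M, f, ?_⟩
      simp only [map_zpow]
      rw [fa]
      intro h; rw [ofAdd_pow_dvd] at h; exact hM h
    · subst h2
      obtain ⟨f, fa, fb⟩ := BS.exists_lift (l := n) (m := m)
        (DihedralGroup.r (1 : ZMod (2 ^ M))) (DihedralGroup.sr 0) (by rw [h, dihedral_rel])
      refine ⟨_, inferInstance, inferInstance, isPGroup_dihedral M, f, ?_⟩
      simp only [map_zpow]
      rw [fa]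
      intro h
      rw [← orderOf_dvd_iff_zpow_eq_one, DihedralGroup.orderOf_r_one] at h
      exact hM h

theorem bs_sep_b {p : ℕ} [Fact p.Prime] (r : ℕ) (m : ℤ) (h : GoodSign p ((p ^ r : ℕ) : ℤ) m)
    (g : BS ((p ^ r : ℕ) : ℤ) m) (hg : g ∉ Subgroup.zpowers (BS.b ((p ^ r : ℕ) : ℤ) m)) :
    SepFrom p (Subgroup.zpowers (BS.b ((p ^ r : ℕ) : ℤ) m)) g := by
  obtain ⟨η, ηa, ηb⟩ := BS.exists_lift (l := ((p ^ r : ℕ) : ℤ)) (m := m) 1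
    (Multiplicative.ofAdd (1 : ℤ)) (by simp)
  have := sep_zpowers (bs_resP r m h) (BS.b ((p ^ r : ℕ) : ℤ) m) g (Multiplicative.toAdd (η g)) 0
    (by
      intro M
      have : NeZero (p ^ M) := ⟨pow_ne_zero _ (Fact.out : p.Prime).ne_zero⟩
      have : Finite (Multiplicative (ZMod (p ^ M))) := inferInstanceAs (Finite (ZMod (p ^ M)))
      refine ⟨_, inferInstance, inferInstance, isPGroup_zmod p M,
        (AddMonoidHom.toMultiplicative (Int.castAddHom (ZMod (p ^ M)))).comp η, ?_, ?_⟩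
      · rw [← map_zpow]
        simp only [MonoidHom.comp_apply]
        congr 1
        rw [map_zpow, ηb, ← ofAdd_zsmul]
        simp
      · simp only [MonoidHom.comp_apply, ηb]
        simp [orderOf_ofAdd_eq_addOrderOf]) (by simpa using hg)
  simpa using this

/-- Reduction of dihedral groups. -/
def dihedralRed (N : ℕ) : DihedralGroup 0 →* DihedralGroup N where
  toFun
    | .r i => .r (ZMod.castHom (dvd_zero N) (ZMod N) i)
    | .sr i => .sr (ZMod.castHom (dvd_zero N) (ZMod N) i)
  map_one' := by
    rw [DihedralGroup.one_def]
    simp only [map_zero]; rfl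
  map_mul' := by
    rintro (i | i) (j | j) <;> simp only [DihedralGroup.r_mul_r, DihedralGroup.r_mul_sr,
      DihedralGroup.sr_mul_r, DihedralGroup.sr_mul_sr, map_add, map_sub]

theorem bs_sep_a {p : ℕ} [Fact p.Prime] (r s : ℕ) (m : ℤ) (h : GoodSign p ((p ^ r : ℕ) : ℤ) m)
    (g : BS ((p ^ r : ℕ) : ℤ) m)
    (hg : g ∉ Subgroup.zpowers (BS.a ((p ^ r : ℕ) : ℤ) m ^ (p ^ s))) :
    SepFrom p (Subgroup.zpowers (BS.a ((p ^ r : ℕ) : ℤ) m ^ (p ^ s))) g := by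
  rcases h with h | ⟨h, h2⟩
  · obtain ⟨η, ηb, ηa⟩ := BS.exists_lift (l := ((p ^ r : ℕ) : ℤ)) (m := m)
      (Multiplicative.ofAdd (1 : ℤ)) 1 (by simp [h])
    refine sep_zpowers (bs_resP r m (Or.inl h)) _ g (Multiplicative.toAdd (η g)) s ?_ hg
    intro M
    have : NeZero (p ^ M) := ⟨pow_ne_zero _ (Fact.out : p.Prime).ne_zero⟩
    have : Finite (Multiplicative (ZMod (p ^ M))) := inferInstanceAs (Finite (ZMod (p ^ M)))
    refine ⟨_, inferInstance, inferInstance, isPGroup_zmod p M,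
      (AddMonoidHom.toMultiplicative (Int.castAddHom (ZMod (p ^ M)))).comp η, ?_, ?_⟩
    · rw [← map_zpow]
      simp only [MonoidHom.comp_apply]
      congr 1
      rw [map_zpow, ηb, ← ofAdd_zsmul]
      simp
    · simp only [MonoidHom.comp_apply, ηb]
      simp [orderOf_ofAdd_eq_addOrderOf]
  · subst h2
    obtain ⟨η, ηa, ηb⟩ := BS.exists_lift (l := ((2 ^ r : ℕ) : ℤ)) (m := m)
        (DihedralGroup.r (1 : ZMod 0)) (DihedralGroup.sr 0) (by rw [h, dihedral_rel])
    have hr1 : ∀ N, dihedralRed N (DihedralGroup.r 1) = DihedralGroup.r 1 := by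
      intro N; simp [dihedralRed]
    rcases hηg : η g with i | i
    · obtain ⟨j, rfl⟩ := ZMod.intCast_surjective i
      refine sep_zpowers (bs_resP r m (Or.inr ⟨h, rfl⟩)) _ g j s ?_ hg
      intro M
      have : NeZero (2 ^ M) := ⟨pow_ne_zero _ (by norm_num)⟩
      refine ⟨_, inferInstance, inferInstance, isPGroup_dihedral M,
        (dihedralRed (2 ^ M)).comp η, ?_, ?_⟩
      · rw [← map_zpow]
        simp only [MonoidHom.comp_apply]
        congr 1
        rw [map_zpow, ηa, hηg, DihedralGroup.r_one_zpow]
      · simp only [MonoidHom.comp_apply, ηa]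
        rw [hr1, DihedralGroup.orderOf_r_one]
    · have : NeZero (2 ^ 1) := ⟨by norm_num⟩
      refine ⟨_, inferInstance, inferInstance, isPGroup_dihedral 1,
        (dihedralRed (2 ^ 1)).comp η, ?_⟩
      rintro ⟨u, ⟨j, rfl⟩, hu⟩
      simp only [map_zpow, map_pow, MonoidHom.comp_apply, ηa, hr1, hηg] at hu
      rw [DihedralGroup.r_one_pow, DihedralGroup.r_zpow] at hu
      simp [dihedralRed] at hu

end BS


/-! ### Extending finite quotients -/

section PropD

open RegularWreathProduct

/-- Any relation of the pair `α', β'` holds for `α, β`. -/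
def Dom {H H' : Type} [Group H] [Group H'] (α β : H) (α' β' : H') : Prop :=
  ∀ w : FreeGroup (Fin 2), FreeGroup.lift ![α', β'] w = 1 → FreeGroup.lift ![α, β] w = 1

theorem Dom.trans {H H' H'' : Type} [Group H] [Group H'] [Group H''] {α β : H} {α' β' : H'}
    {α'' β'' : H''} (h : Dom α β α' β') (h' : Dom α' β' α'' β'') : Dom α β α'' β'' :=
  fun w hw => h w (h' w hw)

theorem lift_comp_pair {H H' : Type} [Group H] [Group H'] (f : H' →* H) (α' β' : H')
    (w : FreeGroup (Fin 2)) :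
    FreeGroup.lift ![f α', f β'] w = f (FreeGroup.lift ![α', β'] w) := by
  have : FreeGroup.lift ![f α', f β'] = f.comp (FreeGroup.lift ![α', β']) := by
    ext i
    fin_cases i <;> simp
  rw [this]; rfl

theorem Dom.of_hom {H H' : Type} [Group H] [Group H'] (f : H' →* H) (α' β' : H') :
    Dom (f α') (f β') α' β' := by
  intro w hw
  rw [lift_comp_pair, hw, map_one]

theorem Dom.of_inj {H H' : Type} [Group H] [Group H'] (f : H →* H') (hf : Function.Injective f)
    (α β : H) : Dom α β (f α) (f β) := by
  intro w hw
  rw [lift_comp_pair] at hw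
  exact hf (by rw [hw, map_one])

/-- The base group of the wreath product. -/
def baseHom (D Q : Type) [Group D] [Group Q] : (Q → D) →* D ≀ᵣ Q where
  toFun f := ⟨f, 1⟩
  map_one' := rfl
  map_mul' f g := by ext <;> simp

theorem baseHom_injective (D Q : Type) [Group D] [Group Q] : Function.Injective (baseHom D Q) := by
  intro f g h
  exact congrArg RegularWreathProduct.left h

theorem baseHom_conj {D Q : Type} [Group D] [Group Q] (f : Q → D) (q : Q) :
    (inl q)⁻¹ * baseHom D Q f * inl q = baseHom D Q (fun x => f (q * x)) := by
  ext <;> simp [baseHom]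

theorem exists_root {p : ℕ} [Fact p.Prime] (H : Type) [Group H] [Finite H] (hH : IsPGroup p H)
    (s : ℕ) : ∃ (K : Type) (_ : Group K) (_ : Finite K), IsPGroup p K ∧ ∃ ι : H →* K,
      Function.Injective ι ∧ ∀ β : H, ∃ γ : K, γ ^ (p ^ s) = ι β := by
  classical
  have hk0 : NeZero (p ^ s) := ⟨pow_ne_zero _ (Fact.out : p.Prime).ne_zero⟩
  have hfin : Finite (Multiplicative (ZMod (p ^ s))) := inferInstanceAs (Finite (ZMod (p ^ s)))
  refine ⟨H ≀ᵣ Multiplicative (ZMod (p ^ s)), inferInstance, inferInstance,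
    isPGroup_wreath hH (isPGroup_zmod p s), (baseHom H _).comp (Pi.constMonoidHom _ H), ?_, ?_⟩
  · intro x y h
    exact congrFun (baseHom_injective _ _ h) 1
  · intro β
    let γ : H ≀ᵣ Multiplicative (ZMod (p ^ s)) :=
      ⟨fun x => if Multiplicative.toAdd x = 0 then β else 1, Multiplicative.ofAdd 1⟩
    refine ⟨γ, ?_⟩
    have hr : ∀ j : ℕ, (γ ^ j).right = Multiplicative.ofAdd (j : ZMod (p ^ s)) := by
      intro j
      induction j with
      | zero => simp
      | succ j ih => rw [pow_succ, mul_right, ih]; simp [γ]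
    have hl : ∀ j : ℕ, j ≤ p ^ s → ∀ x, (γ ^ j).left x =
        if (Multiplicative.toAdd x).val < j then β else 1 := by
      intro j
      induction j with
      | zero => intro _ x; simp
      | succ j ih =>
        intro hj x
        rw [pow_succ', mul_left, Pi.mul_apply, ih (by omega)]
        change (if Multiplicative.toAdd x = 0 then β else 1) *
          (if (-1 + Multiplicative.toAdd x).val < j then β else 1) = _
        by_cases hx : Multiplicative.toAdd x = 0
        · rw [if_pos hx, hx, if_neg, if_pos, mul_one]
          · simp
          · rw [add_zero]
            have h1 : (-1 : ZMod (p ^ s)) = ((p ^ s - 1 : ℕ) : ZMod (p ^ s)) := by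
              rw [Nat.cast_sub (by omega), ZMod.natCast_self]; simp
            rw [h1, ZMod.val_natCast_of_lt (by omega)]
            omega
        · rw [if_neg hx, one_mul]
          obtain ⟨i, hi, hix⟩ : ∃ i : ℕ, i < p ^ s ∧ Multiplicative.toAdd x = (i : ZMod (p ^ s)) :=
            ⟨_, ZMod.val_lt _, (ZMod.natCast_zmod_val _).symm⟩
          rw [hix] at hx ⊢
          rcases i with _ | i
          · simp at hx
          have h2 : (-1 : ZMod (p ^ s)) + ((i + 1 : ℕ) : ZMod (p ^ s)) = (i : ZMod (p ^ s)) := by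
            push_cast; ring
          rw [h2, ZMod.val_natCast_of_lt hi, ZMod.val_natCast_of_lt (by omega)]
          simp
    ext x
    · rw [hl _ le_rfl, if_pos (ZMod.val_lt _)]; rfl
    · rw [hr, ZMod.natCast_self]; rfl

theorem stair {p : ℕ} [Fact p.Prime] (H : Type) [Group H] [Finite H] (hH : IsPGroup p H)
    (n m k : ℤ) (c0 c1 c2 : H) (h0 : (c1 ^ k)⁻¹ * c0 ^ n * c1 ^ k = c0 ^ m)
    (h1 : (c2 ^ k)⁻¹ * c1 ^ n * c2 ^ k = c1 ^ m) (h2 : c2 ^ n = c2 ^ m) :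
    ∃ (W : Type) (_ : Group W) (_ : Finite W), IsPGroup p W ∧ ∃ A T : W,
      (T⁻¹ * A ^ k * T)⁻¹ * A ^ n * (T⁻¹ * A ^ k * T) = A ^ m ∧
      Dom c0 (c1 ^ k) A (T⁻¹ * A ^ k * T) := by
  classical
  have hk0 : NeZero (p ^ 2) := ⟨pow_ne_zero _ (Fact.out : p.Prime).ne_zero⟩
  have hfin : Finite (Multiplicative (ZMod (p ^ 2))) := inferInstanceAs (Finite (ZMod (p ^ 2)))
  let Z := Multiplicative (ZMod (p ^ 2))
  let F : Z → H := fun x => if Multiplicative.toAdd x = 0 then c0 else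
    if Multiplicative.toAdd x = 1 then c1 else if Multiplicative.toAdd x = 2 then c2 else 1
  let q : Z := Multiplicative.ofAdd 1
  have hp2 : 4 ≤ p ^ 2 := by
    have := (Fact.out : p.Prime).two_le
    nlinarith
  have e1 : (1 : ZMod (p ^ 2)) ≠ 0 := by
    intro h
    have := (ZMod.natCast_eq_zero_iff 1 (p ^ 2)).1 (by exact_mod_cast h)
    have := Nat.le_of_dvd (by norm_num) this
    omega
  have e2 : (2 : ZMod (p ^ 2)) ≠ 0 := by
    intro h
    have := (ZMod.natCast_eq_zero_iff 2 (p ^ 2)).1 (by exact_mod_cast h)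
    have := Nat.le_of_dvd (by norm_num) this
    omega
  have e3 : (3 : ZMod (p ^ 2)) ≠ 0 := by
    intro h
    have := (ZMod.natCast_eq_zero_iff 3 (p ^ 2)).1 (by exact_mod_cast h)
    have := Nat.le_of_dvd (by norm_num) this
    omega
  have e21 : (2 : ZMod (p ^ 2)) ≠ 1 := by
    intro h; apply e1; linear_combination h
  have e31 : (3 : ZMod (p ^ 2)) ≠ 1 := by
    intro h; apply e2; linear_combination h
  have e32 : (3 : ZMod (p ^ 2)) ≠ 2 := by
    intro h; apply e1; linear_combination h
  have F0 : ∀ x : Z, Multiplicative.toAdd x = 0 → F x = c0 := by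
    intro x hx; simp only [F, hx, if_true]
  have F1 : ∀ x : Z, Multiplicative.toAdd x = 1 → F x = c1 := by
    intro x hx; simp only [F, hx, if_true, if_neg e1]
  have F2 : ∀ x : Z, Multiplicative.toAdd x = 2 → F x = c2 := by
    intro x hx; simp only [F, hx, if_true, if_neg e2, if_neg e21]
  have F3 : ∀ x : Z, Multiplicative.toAdd x ≠ 0 → Multiplicative.toAdd x ≠ 1 →
      Multiplicative.toAdd x ≠ 2 → F x = 1 := by
    intro x h0 h1 h2; simp only [F, if_neg h0, if_neg h1, if_neg h2]
  have hq : ∀ x : Z, Multiplicative.toAdd (q * x) = 1 + Multiplicative.toAdd x := fun x => rfl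
  have hb : (inl q)⁻¹ * baseHom H Z F ^ k * inl q = baseHom H Z (fun x => F (q * x) ^ k) := by
    rw [← map_zpow, baseHom_conj]; rfl
  refine ⟨H ≀ᵣ Z, inferInstance, inferInstance, isPGroup_wreath hH (isPGroup_zmod p 2),
    baseHom H Z F, inl q, ?_, ?_⟩
  · rw [hb, ← map_inv, ← map_zpow, ← map_mul, ← map_mul, ← map_zpow]
    congr 1
    ext x
    simp only [Pi.mul_apply, Pi.inv_apply, Pi.pow_apply]
    by_cases hx0 : Multiplicative.toAdd x = 0
    · rw [F0 x hx0, F1 (q * x) (by rw [hq, hx0, add_zero]), h0]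
    by_cases hx1 : Multiplicative.toAdd x = 1
    · rw [F1 x hx1, F2 (q * x) (by rw [hq, hx1]; norm_num), h1]
    by_cases hx2 : Multiplicative.toAdd x = 2
    · have h3 : Multiplicative.toAdd (q * x) = 3 := by rw [hq, hx2]; norm_num
      rw [F2 x hx2, F3 (q * x) (by rw [h3]; exact e3) (by rw [h3]; exact e31)
        (by rw [h3]; exact e32), h2]; simp
    · rw [F3 x hx0 hx1 hx2]; simp
  · rw [hb]
    refine Dom.trans ?_ (Dom.of_inj (baseHom H Z) (baseHom_injective H Z) _ _)
    have := Dom.of_hom (Pi.evalMonoidHom (fun _ : Z => H) 1) F (fun x => F (q * x) ^ k)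
    simp only [Pi.evalMonoidHom_apply] at this
    rwa [F0 1 rfl, F1 (q * 1) (by rw [hq]; simp)] at this

theorem conj_zpow' {G : Type} [Group G] (x y : G) (i : ℤ) : (y⁻¹ * x * y) ^ i = y⁻¹ * x ^ i * y := by
  have := conj_zpow (i := i) (a := y⁻¹) (b := x)
  simpa using this

theorem ztwo_facts : (Multiplicative.ofAdd (1 : ZMod (2 ^ 1)) * Multiplicative.ofAdd 1 = 1) ∧
    (Multiplicative.ofAdd (1 : ZMod (2 ^ 1)) ≠ 1) ∧
    ∀ x : Multiplicative (ZMod (2 ^ 1)), x = 1 ∨ x = Multiplicative.ofAdd 1 := by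
  change ((1 : ZMod 2) + 1 = 0) ∧ ((1 : ZMod 2) ≠ 0) ∧ ∀ x : ZMod 2, x = 0 ∨ x = 1
  decide

theorem propD {p : ℕ} [Fact p.Prime] (r s : ℕ) (n m k : ℤ) (hn : n = (p : ℤ) ^ r)
    (hk : k = (p : ℤ) ^ s) (hs : m = n ∨ (m = -n ∧ p = 2 ∧ s ≤ r))
    (H : Type) [Group H] [Finite H] (hH : IsPGroup p H) (α β : H)
    (h : β⁻¹ * α ^ n * β = α ^ m) :
    ∃ (W : Type) (_ : Group W) (_ : Finite W), IsPGroup p W ∧ ∃ A T : W,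
      (T⁻¹ * A ^ k * T)⁻¹ * A ^ n * (T⁻¹ * A ^ k * T) = A ^ m ∧
      Dom α β A (T⁻¹ * A ^ k * T) := by
  obtain ⟨K, _, _, hK, ι, hι, hroot⟩ := exists_root H hH s
  obtain ⟨γ, hγ⟩ := hroot β
  have hkz : ∀ {K : Type} [Group K] (x : K), x ^ k = x ^ (p ^ s) := by
    intro K _ x
    rw [hk, ← zpow_natCast]; push_cast; rfl
  have hγk : γ ^ k = ι β := by rw [hkz, hγ]
  rcases hs with hm | ⟨hm, rfl, hsr⟩
  · subst hm
    obtain ⟨W, i1, i2, hW, A, T, h1, h2⟩ := stair K hK m m k (ι α) γ 1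
      (by rw [hγk, ← map_inv, ← map_zpow, ← map_mul, ← map_mul, h]) (by simp) (by simp)
    refine ⟨W, i1, i2, hW, A, T, h1, Dom.trans ?_ h2⟩
    rw [hγk]
    exact Dom.of_inj ι hι _ _
  · have : Finite (Multiplicative (ZMod (2 ^ 1))) := inferInstanceAs (Finite (ZMod 2))
    let Z := Multiplicative (ZMod (2 ^ 1))
    let q : Z := Multiplicative.ofAdd 1
    have hq2 : q * q = 1 := ztwo_facts.1
    have hq1 : q ≠ 1 := ztwo_facts.2.1
    have hZ : ∀ x : Z, x = 1 ∨ x = q := ztwo_facts.2.2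
    have hp2 : IsPGroup 2 (K ≀ᵣ Z) := isPGroup_wreath hK (isPGroup_zmod 2 1)
    obtain ⟨K', _, _, hK', ι', hι', hroot'⟩ := exists_root (K ≀ᵣ Z) hp2 s
    obtain ⟨δ, hδ⟩ := hroot' (inl q)
    have hδk : δ ^ k = ι' (inl q) := by rw [hkz, hδ]
    let f0 : Z → K := fun _ => ι α
    let f1 : Z → K := fun x => if x = 1 then γ else γ⁻¹
    have g1 : f1 1 = γ := if_pos rfl
    have gq : f1 q = γ⁻¹ := if_neg hq1
    have hc1 : ((ι' (baseHom K Z f1)) ^ k)⁻¹ * (ι' (baseHom K Z f0)) ^ n *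
        (ι' (baseHom K Z f1)) ^ k = (ι' (baseHom K Z f0)) ^ m := by
      simp only [← map_zpow, ← map_mul, ← map_inv]
      congr 2
      ext x
      simp only [Pi.mul_apply, Pi.inv_apply, Pi.pow_apply, f0]
      rcases hZ x with rfl | rfl
      · rw [g1, hγk, ← map_inv, ← map_zpow, ← map_mul, ← map_mul, h, map_zpow]
      · rw [gq, inv_zpow, inv_inv, hγk, ← map_inv, ← map_zpow, ← map_mul, ← map_mul, ← map_zpow]
        congr 1
        have h5 := congrArg (·⁻¹) h
        simp only [mul_inv_rev, inv_inv] at h5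
        rw [hm] at h5 ⊢
        rw [zpow_neg, inv_inv] at h5
        have h6 : (α ^ n)  = β * α ^ (-n) * β⁻¹ := by
          rw [zpow_neg]
          calc α ^ n = α ^ n := rfl
            _ = β⁻¹ * ((α ^ n)⁻¹ * β) := h5.symm
            _ = β⁻¹ * (α ^ n)⁻¹ * β := by group
            _ = β * (α ^ n)⁻¹ * β⁻¹ := by
              have h7 : (α ^ n)⁻¹ = β⁻¹ * α ^ n * β := by rw [h, hm, zpow_neg]
              have h8 : α ^ n = β * (α ^ n)⁻¹ * β⁻¹ := by rw [h7]; group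
              rw [← h8, mul_assoc]; exact h5
        have h7 : (α ^ n)⁻¹ = β⁻¹ * α ^ n * β := by rw [h, hm, zpow_neg]
        rw [zpow_neg]
        have h8 : α ^ n = β * (α ^ n)⁻¹ * β⁻¹ := by rw [h7]; group
        have h9 := congrArg (·⁻¹) h8
        simp only [mul_inv_rev, inv_inv] at h9
        rw [h9]; group
    have hc2 : (δ ^ k)⁻¹ * (ι' (baseHom K Z f1)) ^ n * δ ^ k = (ι' (baseHom K Z f1)) ^ m := by
      rw [hδk]
      simp only [← map_zpow, ← map_mul, ← map_inv (ι')]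
      congr 1
      rw [baseHom_conj]
      congr 1
      ext x
      simp only [Pi.pow_apply, hm]
      rcases hZ x with rfl | rfl
      · rw [mul_one, g1, gq, zpow_neg, inv_zpow]
      · rw [hq2, g1, gq, zpow_neg, inv_zpow, inv_inv]
    have hc3 : δ ^ n = δ ^ m := by
      rw [hm]
      have hsq : (inl q : K ≀ᵣ Z) ^ (2 : ℤ) = 1 := by
        rw [← map_zpow, zpow_two, hq2, map_one]
      have h2k : δ ^ (k * 2) = 1 := by
        rw [zpow_mul, hδk, ← map_zpow, hsq, map_one]
      obtain ⟨j, hj⟩ : k ∣ n := by rw [hn, hk]; exact pow_dvd_pow _ hsr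
      have : δ ^ (n - -n) = 1 := by
        rw [show n - -n = (k * 2) * j by rw [hj]; ring, zpow_mul, h2k, one_zpow]
      rw [zpow_sub, mul_inv_eq_one] at this
      exact this
    obtain ⟨W, i1, i2, hW, A, T, h1, h2⟩ := stair K' hK' n m k _ _ _ hc1 hc2 hc3
    refine ⟨W, i1, i2, hW, A, T, h1, Dom.trans ?_ h2⟩
    rw [← map_zpow]
    refine Dom.trans ?_ (Dom.of_inj ι' hι' _ _)
    rw [← map_zpow]
    refine Dom.trans ?_ (Dom.of_inj (baseHom K Z) (baseHom_injective K Z) _ _)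
    have := Dom.of_hom (Pi.evalMonoidHom (fun _ : Z => K) 1) f0 (f1 ^ k)
    simp only [Pi.evalMonoidHom_apply, Pi.pow_apply] at this
    rw [g1, hγk] at this
    exact Dom.trans (Dom.of_inj ι hι _ _) this

end PropD


/-! ### The Brunner group: sufficiency -/

section Brunner

/-- The generator `a`. -/
def BG.a (l m k : ℤ) : BrunnerGroup l m k :=
  (PresentedGroup.of 0 : PresentedGroup (brunnerRels l m k))

/-- The generator `t`. -/
def BG.t (l m k : ℤ) : BrunnerGroup l m k :=
  (PresentedGroup.of 1 : PresentedGroup (brunnerRels l m k))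

/-- The element `b = t⁻¹ aᵏ t`. -/
def BG.b (l m k : ℤ) : BrunnerGroup l m k := (BG.t l m k)⁻¹ * BG.a l m k ^ k * BG.t l m k

theorem BG.rel (l m k : ℤ) : (BG.b l m k)⁻¹ * BG.a l m k ^ l * BG.b l m k = BG.a l m k ^ m := by
  have h := PresentedGroup.one_of_mem (rels := brunnerRels l m k) (Set.mem_singleton _)
  simp only [map_mul, map_inv, map_zpow] at h
  rw [zpow_neg, zpow_neg, mul_inv_eq_one] at h
  refine Eq.trans ?_ h
  simp only [BG.b, mul_inv_rev, inv_inv]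
  simp only [mul_assoc]
  rfl

theorem BG.exists_lift {l m k : ℤ} {E : Type} [Group E] (α τ : E)
    (h : (τ⁻¹ * α ^ k * τ)⁻¹ * α ^ l * (τ⁻¹ * α ^ k * τ) = α ^ m) :
    ∃ f : BrunnerGroup l m k →* E, f (BG.a l m k) = α ∧ f (BG.t l m k) = τ := by
  have hr : ∀ r ∈ brunnerRels l m k, FreeGroup.lift ![α, τ] r = 1 := by
    intro r hr
    rw [brunnerRels, Set.mem_singleton_iff] at hr
    subst hr
    simp [← h, mul_assoc]
  refine ⟨(PresentedGroup.toGroup hr : PresentedGroup (brunnerRels l m k) →* E), ?_, ?_⟩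
  · exact (PresentedGroup.toGroup.of hr).trans (by simp)
  · exact (PresentedGroup.toGroup.of hr).trans (by simp)

theorem BG.closure (l m k : ℤ) : Subgroup.closure {BG.a l m k, BG.t l m k} = ⊤ := by
  refine Eq.trans ?_ (PresentedGroup.closure_range_of (brunnerRels l m k))
  congr 1
  ext x
  constructor
  · rintro (rfl | rfl)
    · exact ⟨0, rfl⟩
    · exact ⟨1, rfl⟩
  · rintro ⟨i, rfl⟩
    fin_cases i
    · left; rfl
    · right; rfl

theorem BS.surj (l m : ℤ) (g : BS l m) : ∃ w : FreeGroup (Fin 2),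
    ∀ {E : Type} [Group E] (f : BS l m →* E),
      f g = FreeGroup.lift ![f (BS.a l m), f (BS.b l m)] w := by
  obtain ⟨w, rfl⟩ := PresentedGroup.mk_surjective (bsRels l m) g
  refine ⟨w, ?_⟩
  intro E _ f
  have : f.comp (PresentedGroup.mk (bsRels l m)) =
      FreeGroup.lift ![f (BS.a l m), f (BS.b l m)] := by
    ext i
    fin_cases i <;> simp [BS.a, BS.b, PresentedGroup.of]
  rw [← this]; rfl

theorem brunner_suff {p : ℕ} [Fact p.Prime] (r s : ℕ) (n m k : ℤ) (hn : n = ((p ^ r : ℕ) : ℤ))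
    (hk : k = ((p ^ s : ℕ) : ℤ)) (hs : m = n ∨ (m = -n ∧ p = 2 ∧ s ≤ r)) :
    ResP p (BrunnerGroup n m k) := by
  have hgood : GoodSign p ((p ^ r : ℕ) : ℤ) m := by
    rcases hs with h | ⟨h, h2, -⟩
    · exact Or.inl (h.trans hn)
    · exact Or.inr ⟨by rw [h, hn], h2⟩
  obtain ⟨θ, θa, θb⟩ := BS.exists_lift (l := n) (m := m) (BG.a n m k) (BG.b n m k) (BG.rel n m k)
  set a := BG.a n m k with ha
  set b := BG.b n m k with hb
  set t := BG.t n m k with ht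
  have hbt : b = t⁻¹ * a ^ k * t := rfl
  have trans : ∀ (c g : BS n m), SepFrom p (Subgroup.zpowers c) g →
      SepFrom p (Subgroup.zpowers (θ c)) (θ g) := by
    rintro c g ⟨H, _, _, hH, f, hf⟩
    have hrel := congrArg f (BS.rel n m)
    simp only [map_mul, map_inv, map_zpow] at hrel
    obtain ⟨W, i1, i2, hW, A, T, hAT, hdom⟩ := propD r s n m k (by rw [hn]; push_cast; rfl)
      (by rw [hk]; push_cast; rfl) hs H hH _ _ hrel
    obtain ⟨Φ, Φa, Φt⟩ := BG.exists_lift A T hAT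
    refine ⟨W, i1, i2, hW, Φ, ?_⟩
    rintro ⟨u, ⟨j, rfl⟩, hu⟩
    apply hf
    refine ⟨c ^ j, ⟨j, rfl⟩, ?_⟩
    obtain ⟨w, hw⟩ := BS.surj n m (g⁻¹ * c ^ j)
    have h1 := hw f
    have h2 := hw (Φ.comp θ)
    simp only [MonoidHom.comp_apply, θa, θb] at h2
    have Φb : Φ b = T⁻¹ * A ^ k * T := by
      rw [hbt, map_mul, map_mul, map_inv, map_zpow]
      rw [← ha] at Φa
      rw [← ht] at Φt
      rw [Φa, Φt]
    rw [← ha] at Φa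
    rw [Φb, Φa] at h2
    simp only [map_mul, map_inv, map_zpow] at h1 h2 hu ⊢
    rw [hu, inv_mul_cancel] at h2
    rw [hdom w h2.symm, inv_mul_eq_one] at h1
    exact h1.symm
  have hres : ResP p (BS n m) := by rw [hn]; exact bs_resP r m hgood
  have hsepb : ∀ g : BS n m, g ∉ Subgroup.zpowers (BS.b n m) →
      SepFrom p (Subgroup.zpowers (BS.b n m)) g := by
    rw [hn]; exact bs_sep_b r m hgood
  have hsepa : ∀ g : BS n m, g ∉ Subgroup.zpowers (BS.a n m ^ (p ^ s)) →
      SepFrom p (Subgroup.zpowers (BS.a n m ^ (p ^ s))) g := by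
    rw [hn]; exact bs_sep_a r s m hgood
  have hak : θ (BS.a n m ^ (p ^ s)) = a ^ k := by
    have : ∀ q : ℤ, q = ((p ^ s : ℕ) : ℤ) → a ^ q = a ^ (p ^ s) := by
      rintro q rfl; rw [zpow_natCast]
    rw [map_pow, θa, this k hk]
  have hmem : ∀ (c g : BS n m), θ g ∉ Subgroup.zpowers (θ c) → g ∉ Subgroup.zpowers c := by
    rintro c g h ⟨j, rfl⟩
    exact h ⟨j, by simp⟩
  refine hnn_resP θ.range (Subgroup.zpowers (a ^ k)) (Subgroup.zpowers b) t ?_ ?_ ?_ ?_ ?_ ?_ ?_ ?_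
  · rw [eq_top_iff, ← BG.closure, Subgroup.closure_le]
    rintro x (rfl | rfl)
    · exact Subgroup.subset_closure (Or.inl ⟨_, θa⟩)
    · exact Subgroup.subset_closure (Or.inr rfl)
  · rw [Subgroup.zpowers_le]; exact ⟨_, hak⟩
  · rw [Subgroup.zpowers_le]; exact ⟨_, θb⟩
  · intro x
    rw [conj_mem_zpowers x (a ^ k) t, hbt]
  · intro E _ φ v hv
    have h1 := hv (a ^ k) (Subgroup.mem_zpowers _)
    rw [map_zpow] at h1
    have h3 : v⁻¹ * φ a ^ k * v = φ a ^ k := by rw [mul_assoc, ← h1]; group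
    have h4 : (v * φ t)⁻¹ * φ a ^ k * (v * φ t) = φ b := by
      calc (v * φ t)⁻¹ * φ a ^ k * (v * φ t) = (φ t)⁻¹ * (v⁻¹ * φ a ^ k * v) * φ t := by group
        _ = φ b := by rw [h3, hbt]; simp
    obtain ⟨f, fa, ft⟩ := BG.exists_lift (l := n) (m := m) (k := k) (φ a) (v * φ t) (by
      rw [h4, ← map_zpow, ← map_inv, ← map_mul, ← map_mul, ← map_zpow]
      exact congrArg φ (BG.rel n m k))
    refine ⟨f, ?_, ft⟩
    rintro _ ⟨g, rfl⟩
    obtain ⟨w, hw⟩ := BS.surj n m g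
    have e1 := hw (f.comp θ)
    have e2 := hw (φ.comp θ)
    simp only [MonoidHom.comp_apply, θa, θb] at e1 e2
    rw [e1, e2]
    have : f b = φ b := by
      rw [← h4, hbt, map_mul, map_mul, map_inv, map_zpow]
      rw [← ha] at fa
      rw [← ht] at ft
      rw [fa, ft]
    rw [this]
    rw [← ha] at fa
    rw [fa]
  · rintro _ ⟨g, rfl⟩ hg
    rw [← hak] at hg ⊢
    exact trans _ _ (hsepa g (hmem _ _ hg))
  · rintro _ ⟨g, rfl⟩ hg
    rw [← θb] at hg ⊢
    exact trans _ _ (hsepb g (hmem _ _ hg))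
  · rintro _ ⟨g, rfl⟩ hg
    have hg1 : g ≠ 1 := by rintro rfl; simp at hg
    have := trans 1 g (by rw [Subgroup.zpowers_one_eq_bot]; exact hres g hg1)
    rwa [map_one, Subgroup.zpowers_one_eq_bot] at this

end Brunner


/-! ### The HNN tower -/

section Tower

theorem exists_zpowers_equiv {G : Type} [Group G] (x y : G) (hx : ∀ i : ℤ, x ^ i = 1 → i = 0)
    (hy : ∀ i : ℤ, y ^ i = 1 → i = 0) :
    ∃ φ : Subgroup.zpowers x ≃* Subgroup.zpowers y, ∀ i : ℤ, ∀ h, (φ ⟨x ^ i, h⟩ : G) = y ^ i := by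
  have key : ∀ z : G, (∀ i : ℤ, z ^ i = 1 → i = 0) →
      ∃ e : Multiplicative ℤ ≃* Subgroup.zpowers z, ∀ i : ℤ,
        (e (Multiplicative.ofAdd i) : G) = z ^ i := by
    intro z hz
    let f : Multiplicative ℤ →* Subgroup.zpowers z :=
      (zpowersHom G z).codRestrict (Subgroup.zpowers z) (fun i => ⟨Multiplicative.toAdd i, rfl⟩)
    have hf : ∀ i, (f i : G) = z ^ (Multiplicative.toAdd i) := fun i => rfl
    refine ⟨MulEquiv.ofBijective f ⟨?_, ?_⟩, ?_⟩
    · rw [injective_iff_map_eq_one]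
      intro i hi
      have := hz (Multiplicative.toAdd i) (by rw [← hf, hi]; rfl)
      exact Multiplicative.toAdd.injective this
    · rintro ⟨_, ⟨i, rfl⟩⟩
      exact ⟨Multiplicative.ofAdd i, rfl⟩
    · intro i; rfl
  obtain ⟨e, he⟩ := key x hx
  obtain ⟨f, hf⟩ := key y hy
  refine ⟨e.symm.trans f, ?_⟩
  intro i h
  have : (⟨x ^ i, h⟩ : Subgroup.zpowers x) = e (Multiplicative.ofAdd i) :=
    Subtype.ext (he i).symm
  rw [this]
  simp [hf]

open HNNExtension in
theorem hnn_word_ne {G : Type} [Group G] {A B : Subgroup G} (φ : A ≃* B) (e : ℤˣ) (g u v : G)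
    (hg : g ∉ toSubgroup A B e) (hu : u ∉ toSubgroup A B (-e)) (hv : v ∉ toSubgroup A B (-e)) :
    let T : HNNExtension G A B φ := t ^ (e : ℤ)
    let d : HNNExtension G A B φ := T * of g * T⁻¹
    (d⁻¹ * of u * d) * of v ≠ of v * (d⁻¹ * of u * d) := by
  intro T d h
  let w : NormalWord.ReducedWord G A B :=
    { head := 1
      toList := [(e, g⁻¹), (-e, u), (e, g), (-e, v), (e, g⁻¹), (-e, u⁻¹), (e, g), (-e, v⁻¹)]
      chain := by simp [hg, hu, hv] }
  have hw : w.prod φ = (d⁻¹ * of u * d) * of v * (d⁻¹ * of u * d)⁻¹ * (of v)⁻¹ := by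
    simp [NormalWord.ReducedWord.prod, w, d, T, mul_assoc]
  rw [h] at hw
  have := HNNExtension.ReducedWord.toList_eq_nil_of_mem_of_range φ w (by rw [hw]; exact ⟨1, by rw [map_one, mul_inv_cancel_right, mul_inv_cancel]⟩)
  simp [w] at this

theorem hnn_embed {Γ : Type} [Group Γ] (x y : Γ) (hx : ∀ i : ℤ, x ^ i = 1 → i = 0)
    (hy : ∀ i : ℤ, y ^ i = 1 → i = 0) :
    ∃ (E : Type) (_ : Group E) (ι : Γ →* E) (t : E), Function.Injective ι ∧
      t⁻¹ * ι x * t = ι y ∧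
      (∀ {K : Type} [Group K] (f : Γ →* K) (τ : K), τ⁻¹ * f x * τ = f y →
        ∃ f' : E →* K, (∀ z, f' (ι z) = f z) ∧ f' t = τ) ∧
      (∀ g u v, g ∉ Subgroup.zpowers x → u ∉ Subgroup.zpowers y → v ∉ Subgroup.zpowers y →
        ((t⁻¹ * ι g * t)⁻¹ * ι u * (t⁻¹ * ι g * t)) * ι v ≠
          ι v * ((t⁻¹ * ι g * t)⁻¹ * ι u * (t⁻¹ * ι g * t))) ∧
      (∀ g u v, g ∉ Subgroup.zpowers y → u ∉ Subgroup.zpowers x → v ∉ Subgroup.zpowers x →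
        ((t * ι g * t⁻¹)⁻¹ * ι u * (t * ι g * t⁻¹)) * ι v ≠
          ι v * ((t * ι g * t⁻¹)⁻¹ * ι u * (t * ι g * t⁻¹))) := by
  obtain ⟨φ, hφ⟩ := exists_zpowers_equiv x y hx hy
  have hφ1 : (φ ⟨x, Subgroup.mem_zpowers x⟩ : Γ) = y := by
    have := hφ 1 (by simp)
    simpa using this
  refine ⟨HNNExtension Γ _ _ φ, inferInstance, HNNExtension.of, HNNExtension.t⁻¹,
    HNNExtension.of_injective _, ?_, ?_, ?_, ?_⟩
  · have := HNNExtension.t_mul_of (φ := φ) ⟨x, Subgroup.mem_zpowers x⟩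
    rw [hφ1] at this
    rw [inv_inv, this]; simp
  · intro K _ f τ h
    refine ⟨HNNExtension.lift f τ⁻¹ ?_, ?_, ?_⟩
    · rintro ⟨_, ⟨i, rfl⟩⟩
      have h1 : (φ ⟨x ^ i, ⟨i, rfl⟩⟩ : Γ) = y ^ i := hφ i _
      have h2 : τ⁻¹ * f (x ^ i) = f (y ^ i) * τ⁻¹ := by
        rw [map_zpow, map_zpow, ← h, conj_zpow']
        group
      exact h2.trans (by rw [← h1])
    · intro z; simp
    · simp
  · intro g u v hg hu hv
    have := hnn_word_ne φ 1 g u v hg hu hv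
    simpa using this
  · intro g u v hg hu hv
    have := hnn_word_ne φ (-1) g u v (by simpa using hg) (by simpa using hu) (by simpa using hv)
    simpa using this

theorem tower (l m k : ℤ) (hl : l ≠ 0) (hm : m ≠ 0) (hk : k ≠ 0) :
    let a := BG.a l m k
    let b := BG.b l m k
    let t := BG.t l m k
    (∀ i : ℤ, a ^ i = 1 → i = 0) ∧
    (∀ i u v : ℤ, ¬ l ∣ i → ¬ m ∣ u → ¬ m ∣ v →
      ((b⁻¹ * a ^ i * b)⁻¹ * a ^ u * (b⁻¹ * a ^ i * b)) * a ^ v ≠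
        a ^ v * ((b⁻¹ * a ^ i * b)⁻¹ * a ^ u * (b⁻¹ * a ^ i * b))) ∧
    (∀ i u v : ℤ, ¬ m ∣ i → ¬ l ∣ u → ¬ l ∣ v →
      ((b * a ^ i * b⁻¹)⁻¹ * a ^ u * (b * a ^ i * b⁻¹)) * a ^ v ≠
        a ^ v * ((b * a ^ i * b⁻¹)⁻¹ * a ^ u * (b * a ^ i * b⁻¹))) ∧
    (∀ i u v : ℤ, ¬ k ∣ i → u ≠ 0 → v ≠ 0 →
      ((t⁻¹ * a ^ i * t)⁻¹ * a ^ u * (t⁻¹ * a ^ i * t)) * a ^ v ≠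
        a ^ v * ((t⁻¹ * a ^ i * t)⁻¹ * a ^ u * (t⁻¹ * a ^ i * t))) ∧
    (l = 1 → ¬ m ∣ 1 →
      ((t⁻¹ * (b * a ^ k * b⁻¹) * t)⁻¹ * a * (t⁻¹ * (b * a ^ k * b⁻¹) * t)) * a ≠
        a * ((t⁻¹ * (b * a ^ k * b⁻¹) * t)⁻¹ * a * (t⁻¹ * (b * a ^ k * b⁻¹) * t))) := by
  intro a b t
  have hzi : ∀ (j i : ℤ), (Multiplicative.ofAdd j) ^ i = Multiplicative.ofAdd (i * j) := by
    intro j i; rw [← ofAdd_zsmul]; simp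
  have hz : ∀ j : ℤ, j ≠ 0 → ∀ i : ℤ, (Multiplicative.ofAdd j) ^ i = 1 → i = 0 := by
    intro j hj i h
    rw [hzi, ofAdd_eq_one] at h
    simpa [hj] using h
  have hzm : ∀ j i : ℤ, ¬ j ∣ i → Multiplicative.ofAdd i ∉ Subgroup.zpowers (Multiplicative.ofAdd j) := by
    rintro j i h ⟨c, hc⟩
    simp only [hzi] at hc
    have := Multiplicative.ofAdd.injective hc
    exact h ⟨c, by rw [← this, mul_comm]⟩
  obtain ⟨Γ, _, ι, b1, hι, hb1, hΓlift, hΓ1, hΓ2⟩ := hnn_embed (Multiplicative.ofAdd l)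
    (Multiplicative.ofAdd m) (hz l hl) (hz m hm)
  obtain ⟨a1, ha1⟩ : ∃ a1, a1 = ι (Multiplicative.ofAdd 1) := ⟨_, rfl⟩
  have ha1p : ∀ i : ℤ, ι (Multiplicative.ofAdd i) = a1 ^ i := by
    intro i; rw [ha1, ← map_zpow, hzi, mul_one]
  have ha1i : ∀ i : ℤ, a1 ^ i = 1 → i = 0 := by
    intro i hi
    rw [← ha1p, ← map_one ι] at hi
    exact Multiplicative.ofAdd.injective (hι hi)
  obtain ⟨e, he, heb⟩ := hΓlift (1 : Multiplicative ℤ →* Multiplicative ℤ)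
    (Multiplicative.ofAdd 1) (by simp)
  have hea : e a1 = 1 := by rw [ha1, he]; rfl
  have hb1i : ∀ i : ℤ, b1 ^ i = 1 → i = 0 := by
    intro i hi
    have := congrArg e hi
    rw [map_zpow, heb, map_one e] at this
    exact hz 1 one_ne_zero i this
  have hab : ∀ j : ℤ, j ≠ 0 → a1 ^ j ∉ Subgroup.zpowers b1 := by
    rintro j hj ⟨i, hi⟩
    simp only at hi
    have := congrArg e hi
    rw [map_zpow, map_zpow, heb, hea, one_zpow] at this
    have := hz 1 one_ne_zero i this
    rw [this, zpow_zero] at hi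
    exact hj (ha1i j hi.symm)
  obtain ⟨Δ, _, κ, t2, hκ, ht2, -, hΔ1, -⟩ := hnn_embed (a1 ^ k) b1 (by
    intro i hi
    rw [← zpow_mul] at hi
    have := ha1i _ hi
    simpa [hk] using this) hb1i
  rw [map_zpow] at ht2
  rw [ha1p, ha1p] at hb1
  obtain ⟨F, Fa, Ft⟩ := BG.exists_lift (l := l) (m := m) (k := k) (κ a1) t2 (by
    rw [ht2, ← map_zpow, ← map_zpow, ← hb1]; simp)
  change F a = _ at Fa
  change F t = _ at Ft
  have Fb : F b = κ b1 := by
    rw [← ht2]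
    change F (t⁻¹ * a ^ k * t) = _
    simp [Fa, Ft]
  refine ⟨?_, ?_, ?_, ?_, ?_⟩
  · intro i hi
    have := congrArg F hi
    rw [map_zpow, Fa, map_one, ← map_zpow, ← map_one κ] at this
    exact ha1i i (hκ this)
  · intro i u v hi hu hv h
    have := congrArg F h
    simp only [map_mul, map_inv, map_zpow, Fa, Fb] at this
    simp only [← map_mul, ← map_inv, ← map_zpow] at this
    have h2 := hκ this
    have h3 := hΓ1 (Multiplicative.ofAdd i) (Multiplicative.ofAdd u) (Multiplicative.ofAdd v)
      (hzm _ _ hi) (hzm _ _ hu) (hzm _ _ hv)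
    simp only [ha1p] at h3
    exact h3 h2
  · intro i u v hi hu hv h
    have := congrArg F h
    simp only [map_mul, map_inv, map_zpow, Fa, Fb] at this
    simp only [← map_mul, ← map_inv, ← map_zpow] at this
    have h2 := hκ this
    have h3 := hΓ2 (Multiplicative.ofAdd i) (Multiplicative.ofAdd u) (Multiplicative.ofAdd v)
      (hzm _ _ hi) (hzm _ _ hu) (hzm _ _ hv)
    simp only [ha1p] at h3
    exact h3 h2
  · intro i u v hi hu hv h
    have := congrArg F h
    simp only [map_mul, map_inv, map_zpow, Fa, Ft] at this
    have h3 := hΔ1 (a1 ^ i) (a1 ^ u) (a1 ^ v) (by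
      rintro ⟨j, hj⟩
      simp only at hj
      rw [← zpow_mul, ← mul_inv_eq_one, ← zpow_neg, ← zpow_add] at hj
      have := ha1i _ hj
      exact hi ⟨j, by omega⟩) (hab u hu) (hab v hv)
    simp only [map_zpow] at h3
    exact h3 this
  · intro hl1 hm1 h
    have := congrArg F h
    simp only [map_mul, map_inv, map_zpow, Fa, Ft, Fb] at this
    have h3 := hΔ1 (b1 * a1 ^ k * b1⁻¹) a1 a1 (by
      rintro ⟨j, hj⟩
      simp only at hj
      have h4 : b1⁻¹ * (a1 ^ k) ^ j * b1 = a1 ^ k := by rw [hj]; group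
      rw [hl1, zpow_one] at hb1
      rw [← zpow_mul, ← conj_zpow', hb1, ← zpow_mul, ← mul_inv_eq_one, ← zpow_neg, ← zpow_add] at h4
      have h5 := ha1i _ h4
      apply hm1
      refine ⟨j, ?_⟩
      have h6 : k * (m * j) = k * 1 := by linear_combination h5
      exact (mul_left_cancel₀ hk h6).symm)
      (by simpa using hab 1 one_ne_zero) (by simpa using hab 1 one_ne_zero)
    simp only [map_mul, map_inv, map_zpow] at h3
    exact h3 this

end Tower


/-! ### Necessity -/

section Necessity

open scoped commutatorElement

theorem resid_eq {p : ℕ} [Fact p.Prime] {G : Type} [Group G] (h : ResiduallyPGroup p G) (x y : G)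
    (hxy : ∀ (Q : Type) [Group Q] [Finite Q], IsPGroup p Q → ∀ f : G →* Q, f x = f y) : x = y := by
  by_contra hne
  obtain ⟨N, hN, hxN, k, hk⟩ := h (x * y⁻¹) (by rwa [Ne, mul_inv_eq_one])
  have hcard : Nat.card (G ⧸ N) = p ^ k := by rw [← hk]; rfl
  have : Finite (G ⧸ N) := Nat.finite_of_card_ne_zero (by
    rw [hcard]; exact pow_ne_zero _ (Fact.out : p.Prime).ne_zero)
  have := hxy (G ⧸ N) (IsPGroup.of_card hcard) (QuotientGroup.mk' N)
  apply hxN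
  rw [← QuotientGroup.eq_one_iff]
  have h2 : QuotientGroup.mk' N (x * y⁻¹) = 1 := by rw [map_mul, map_inv, this, mul_inv_cancel]
  exact h2

theorem pgroup_coprime {p : ℕ} [Fact p.Prime] {Q : Type} [Group Q] (hQ : IsPGroup p Q) (x : Q)
    (u : ℤ) (hu : ¬ (p : ℤ) ∣ u) : ∃ j : ℤ, (x ^ u) ^ j = x := by
  rw [isPGroup_iff_pow_pow_eq_one] at hQ
  obtain ⟨M, hM⟩ := hQ x
  have hc : IsCoprime (u : ℤ) ((p : ℤ) ^ M) := by
    refine IsCoprime.pow_right ?_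
    have := (Nat.prime_iff_prime_int.1 (Fact.out : p.Prime)).irreducible.coprime_iff_not_dvd.2 hu
    exact this.symm
  obtain ⟨c, d, hcd⟩ := hc
  refine ⟨c, ?_⟩
  have hM' : x ^ ((p : ℤ) ^ M) = 1 := by exact_mod_cast hM
  rw [← zpow_mul]
  have : u * c = 1 - (p : ℤ) ^ M * d := by linear_combination hcd
  rw [this, zpow_sub, zpow_mul, hM']
  simp

theorem conj_eq_pow_p {p : ℕ} [Fact p.Prime] {Q : Type} [Group Q] [Finite Q] (hQ : IsPGroup p Q)
    (z β : Q) (c : ℤ) (h : β⁻¹ * z * β = z ^ ((p : ℤ) * c)) : z = 1 := by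
  by_contra hz
  have hp := (Fact.out : p.Prime)
  rw [isPGroup_iff_pow_pow_eq_one] at hQ
  obtain ⟨M, hM⟩ := hQ z
  have h1 := orderOf_dvd_of_pow_eq_one hM
  obtain ⟨j, -, hj⟩ := (Nat.dvd_prime_pow hp).1 h1
  rcases j with _ | j
  · rw [pow_zero, orderOf_eq_one_iff] at hj; exact hz hj
  have h2 : z ^ ((p : ℤ) ^ (j + 1)) = 1 := by
    have := pow_orderOf_eq_one z
    rw [hj] at this
    exact_mod_cast this
  have h3 : (β⁻¹ * z * β) ^ ((p : ℤ) ^ j) = 1 := by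
    rw [h, ← zpow_mul, show (p : ℤ) * c * (p : ℤ) ^ j = (p : ℤ) ^ (j + 1) * c by ring, zpow_mul, h2,
      one_zpow]
  rw [conj_zpow'] at h3
  have h4 : z ^ ((p : ℤ) ^ j) = 1 := by
    have : z ^ ((p : ℤ) ^ j) = β * (β⁻¹ * z ^ ((p : ℤ) ^ j) * β) * β⁻¹ := by group
    rw [this, h3]; group
  have h5 : z ^ (p ^ j) = 1 := by exact_mod_cast h4
  have h6 := orderOf_dvd_of_pow_eq_one h5
  rw [hj] at h6
  have := (Nat.pow_dvd_pow_iff_le_right hp.one_lt).1 h6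
  omega

theorem pow_rel {p : ℕ} [Fact p.Prime] {Q : Type} [Group Q] (hQ : IsPGroup p Q) (x : Q)
    (r : ℕ) (A : ℤ) (hA : ¬ (p : ℤ) ∣ A) : ∃ j : ℤ, (x ^ ((p : ℤ) ^ r * A)) ^ j = x ^ ((p : ℤ) ^ r) := by
  obtain ⟨j, hj⟩ := pgroup_coprime hQ (x ^ ((p : ℤ) ^ r)) A hA
  exact ⟨j, by rw [zpow_mul, hj]⟩

theorem exists_decomp (p : ℕ) [Fact p.Prime] (l : ℤ) (hl : l ≠ 0) :
    ∃ (r : ℕ) (l' : ℤ), l = (p : ℤ) ^ r * l' ∧ ¬ (p : ℤ) ∣ l' := by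
  have hf : FiniteMultiplicity (p : ℤ) l := by
    rw [Int.finiteMultiplicity_iff]
    have := (Fact.out : p.Prime).ne_one
    exact ⟨by simpa using this, hl⟩
  obtain ⟨c, h1, h2⟩ := hf.exists_eq_pow_mul_and_not_dvd
  exact ⟨_, c, h1, h2⟩

theorem norm_conj {Q : Type} [Group Q] (y β : Q)
    (h : Subgroup.zpowers (β⁻¹ * y * β) = Subgroup.zpowers y) (j : ℤ) :
    ∃ i : ℤ, (β ^ j)⁻¹ * y * β ^ j = y ^ i := by
  have h1 : β ∈ Subgroup.normalizer (Subgroup.zpowers y : Set Q) := by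
    rw [Subgroup.mem_normalizer_iff'']
    intro x
    have := conj_mem_zpowers x y β
    rwa [h] at this
  have h2 := (Subgroup.normalizer (Subgroup.zpowers y : Set Q)).zpow_mem h1 j
  rw [Subgroup.mem_normalizer_iff''] at h2
  obtain ⟨i, hi⟩ := (h2 y).1 (Subgroup.mem_zpowers y)
  exact ⟨i, hi.symm⟩

theorem brunner_nec {p : ℕ} [Fact p.Prime] (l m k : ℤ) (hl : 0 < l) (hml : l ≤ |m|) (hk : 0 < k)
    (h : ResiduallyPGroup p (BrunnerGroup l m k)) :
    ∃ r s : ℕ, |m| = l ∧ l = (p : ℤ) ^ r ∧ k = (p : ℤ) ^ s ∧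
        (m = -l → p = 2 ∧ s ≤ r) := by
  have hm0 : m ≠ 0 := by rintro rfl; simp at hml; omega
  have hp : p.Prime := Fact.out
  have hpp : (0 : ℤ) < p := by exact_mod_cast hp.pos
  obtain ⟨T1, T2, T3, T4, T5⟩ := tower l m k hl.ne' hm0 hk.ne'
  set a := BG.a l m k with ha
  set b := BG.b l m k with hb
  set t := BG.t l m k with ht
  have hbt : b = t⁻¹ * a ^ k * t := rfl
  have hrel : b⁻¹ * a ^ l * b = a ^ m := BG.rel l m k
  have frel : ∀ (Q : Type) [Group Q] (f : BrunnerGroup l m k →* Q),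
      (f b)⁻¹ * f a ^ l * f b = f a ^ m := by
    intro Q _ f
    rw [← map_zpow, ← map_inv, ← map_mul, ← map_mul, ← map_zpow]
    exact congrArg f hrel
  have frel' : ∀ (Q : Type) [Group Q] (f : BrunnerGroup l m k →* Q),
      f b * f a ^ m * (f b)⁻¹ = f a ^ l := by
    intro Q _ f
    rw [← frel Q f]; group
  have fb : ∀ (Q : Type) [Group Q] (f : BrunnerGroup l m k →* Q),
      f b = (f t)⁻¹ * f a ^ k * f t := by
    intro Q _ f
    rw [hbt, map_mul, map_mul, map_inv, map_zpow]
  clear_value a b t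
  obtain ⟨r, l', hl', hpl'⟩ := exists_decomp p l hl.ne'
  obtain ⟨r', m', hm', hpm'⟩ := exists_decomp p m hm0
  obtain ⟨s, k', hk', hpk'⟩ := exists_decomp p k hk.ne'
  have hrr : r' = r := by
    rcases lt_trichotomy r r' with hlt | heq | hgt
    · exfalso
      have h1 : a ^ l = 1 := by
        apply resid_eq h
        intro Q _ _ hQ f
        rw [map_one, map_zpow]
        obtain ⟨j, hj⟩ := pow_rel hQ (f a) r l' hpl'
        rw [← hl'] at hj
        obtain ⟨q, rfl⟩ : ∃ q, r' = r + 1 + q := ⟨r' - r - 1, by omega⟩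
        refine conj_eq_pow_p hQ _ (f b) (j * (p : ℤ) ^ q * m') ?_
        rw [frel, show (p : ℤ) * (j * (p : ℤ) ^ q * m') = j * ((p : ℤ) * (p : ℤ) ^ q * m') by ring,
          zpow_mul, hj, ← zpow_mul]
        refine congrArg (f a ^ ·) (hm'.trans ?_)
        ring
      exact hl.ne' (T1 _ h1)
    · exact heq.symm
    · exfalso
      have h1 : a ^ m = 1 := by
        apply resid_eq h
        intro Q _ _ hQ f
        rw [map_one, map_zpow]
        obtain ⟨j, hj⟩ := pow_rel hQ (f a) r' m' hpm'
        rw [← hm'] at hj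
        obtain ⟨q, rfl⟩ : ∃ q, r = r' + 1 + q := ⟨r - r' - 1, by omega⟩
        refine conj_eq_pow_p hQ _ (f b)⁻¹ (j * (p : ℤ) ^ q * l') ?_
        rw [inv_inv, frel', show (p : ℤ) * (j * (p : ℤ) ^ q * l') = j * ((p : ℤ) * (p : ℤ) ^ q * l')
          by ring, zpow_mul, hj, ← zpow_mul]
        refine congrArg (f a ^ ·) (hl'.trans ?_)
        ring
      exact hm0 (T1 _ h1)
  subst hrr
  have hlp : l ∣ (p : ℤ) ^ r' := by
    by_contra hnd
    have hm1 : ¬ m ∣ 1 := by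
      intro hd
      have h1 := Int.le_of_dvd one_pos ((abs_dvd m 1).2 hd)
      have : l = 1 := by omega
      rw [this] at hnd
      exact hnd (one_dvd _)
    refine T2 ((p : ℤ) ^ r') 1 1 hnd hm1 hm1 (resid_eq h _ _ ?_)
    intro Q _ _ hQ f
    obtain ⟨j, hj⟩ := pow_rel hQ (f a) r' l' hpl'
    rw [← hl'] at hj
    have e1 : (f b)⁻¹ * f a ^ ((p : ℤ) ^ r') * f b = f a ^ (m * j) := by
      rw [← hj, ← conj_zpow', frel, ← zpow_mul]
    simp only [map_mul, map_inv, map_zpow, e1, zpow_one]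
    group
  have hlr : l = (p : ℤ) ^ r' := by
    refine Int.dvd_antisymm hl.le (by positivity) hlp ?_
    rw [hl']; exact dvd_mul_right _ _
  have hml' : |m| = l := by
    by_cases hmd : m ∣ (p : ℤ) ^ r'
    · rw [← hlr] at hmd
      have := Int.le_of_dvd hl ((abs_dvd m l).2 hmd)
      omega
    by_cases hl1 : l ∣ 1
    · have hl1 : l = 1 := Int.eq_one_of_dvd_one hl.le hl1
      by_cases hm1 : m ∣ 1
      · have := Int.le_of_dvd one_pos ((abs_dvd m 1).2 hm1)
        omega
      exfalso
      have hpm : ¬ (p : ℤ) ∣ m := by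
        rcases r' with _ | r'
        · rw [hm', pow_zero, one_mul]; exact hpm'
        · exfalso
          have : (p : ℤ) ∣ 1 := by rw [← hl1, hlr]; exact dvd_pow_self _ (by omega)
          have := Int.le_of_dvd one_pos this
          have := hp.two_le
          omega
      refine T5 hl1 hm1 (resid_eq h _ _ ?_)
      intro Q _ _ hQ f
      obtain ⟨j, hj⟩ := pgroup_coprime hQ (f a) m hpm
      have e0 : (f b)⁻¹ * f a * f b = f a ^ m := by
        have := frel Q f
        rwa [show f a ^ l = f a from (congrArg (f a ^ ·) hl1).trans (zpow_one _)] at this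
      have e1 : f b * f a ^ k * (f b)⁻¹ = (f a ^ k) ^ j := by
        have : f b * (f a ^ m) * (f b)⁻¹ = f a := by rw [← e0]; group
        calc f b * f a ^ k * (f b)⁻¹ = f b * ((f a ^ m) ^ j) ^ k * (f b)⁻¹ := by rw [hj]
          _ = (f b * (f a ^ m) * (f b)⁻¹) ^ (j * k) := by rw [conj_zpow, zpow_mul]
          _ = (f a ^ k) ^ j := by rw [this, ← zpow_mul, mul_comm]
      have e2 : (f t)⁻¹ * (f a ^ k) ^ j * f t = f b ^ j := by
        rw [fb, conj_zpow']
      obtain ⟨i, hi⟩ := norm_conj (f a) (f b) (by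
        rw [e0]
        apply le_antisymm
        · rw [Subgroup.zpowers_le]; exact ⟨m, rfl⟩
        · rw [Subgroup.zpowers_le]; exact ⟨j, hj⟩) j
      simp only [map_mul, map_inv, map_zpow, e1, e2, hi]
      group
    · exfalso
      refine T3 ((p : ℤ) ^ r') 1 1 hmd hl1 hl1 (resid_eq h _ _ ?_)
      intro Q _ _ hQ f
      obtain ⟨j, hj⟩ := pow_rel hQ (f a) r' m' hpm'
      rw [← hm'] at hj
      have e1 : f b * f a ^ ((p : ℤ) ^ r') * (f b)⁻¹ = f a ^ (l * j) := by
        rw [← hj, ← conj_zpow, frel', ← zpow_mul]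
      simp only [map_mul, map_inv, map_zpow, e1, zpow_one]
      group
  have hsgn : m = l ∨ m = -l := by
    rcases abs_cases m with ⟨h1, -⟩ | ⟨h1, -⟩ <;> omega
  have hkp : k ∣ (p : ℤ) ^ s := by
    by_contra hnd
    refine T4 ((p : ℤ) ^ s) l l hnd hl.ne' hl.ne' (resid_eq h _ _ ?_)
    intro Q _ _ hQ f
    obtain ⟨j, hj⟩ := pow_rel hQ (f a) s k' hpk'
    rw [← hk'] at hj
    have e1 : (f t)⁻¹ * f a ^ ((p : ℤ) ^ s) * f t = f b ^ j := by
      rw [← hj, ← conj_zpow', ← fb]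
    obtain ⟨i, hi⟩ := norm_conj (f a ^ l) (f b) (by
      rw [frel]
      rcases hsgn with h1 | h1
      · exact congrArg (fun q : ℤ => Subgroup.zpowers (f a ^ q)) h1
      · rw [show f a ^ m = (f a ^ l)⁻¹ from (congrArg (f a ^ ·) h1).trans (zpow_neg _ _),
          Subgroup.zpowers_inv]) j
    simp only [map_mul, map_inv, map_zpow, e1, hi]
    group
  have hks : k = (p : ℤ) ^ s := by
    refine Int.dvd_antisymm hk.le (by positivity) hkp ?_
    rw [hk']; exact dvd_mul_right _ _
  refine ⟨r', s, hml', hlr, hks, ?_⟩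
  intro hneg
  have finv : ∀ (Q : Type) [Group Q] (f : BrunnerGroup l m k →* Q),
      (f b)⁻¹ * f a ^ l * f b = (f a ^ l)⁻¹ := by
    intro Q _ f
    have := frel Q f
    rw [this, ← zpow_neg]
    exact congrArg (f a ^ ·) hneg
  have hp2 : p = 2 := by
    by_contra hp2
    have h1 : a ^ l = 1 := by
      apply resid_eq h
      intro Q _ _ hQ f
      rw [map_one, map_zpow]
      have e1 := finv Q f
      have hQ' := hQ
      rw [isPGroup_iff_pow_pow_eq_one] at hQ'
      obtain ⟨M, hM⟩ := hQ' (f b)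
      have hodd : Odd (p ^ M) := (hp.odd_of_ne_two hp2).pow
      generalize f a ^ l = y at *
      generalize f b = β at *
      have e2 : ∀ N : ℕ, (β ^ N)⁻¹ * y * β ^ N = y ^ ((-1 : ℤ) ^ N) := by
        intro N
        induction N with
        | zero => simp
        | succ N ih =>
          calc (β ^ (N + 1))⁻¹ * y * β ^ (N + 1) = β⁻¹ * ((β ^ N)⁻¹ * y * β ^ N) * β := by
                rw [pow_succ]; group
            _ = y ^ ((-1 : ℤ) ^ (N + 1)) := by
                rw [ih, ← conj_zpow', e1, inv_zpow, ← zpow_neg, pow_succ]; simp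
      have e3 := e2 (p ^ M)
      rw [hM, hodd.neg_one_pow] at e3
      have e4 : y ^ (2 : ℤ) = 1 := by
        rw [zpow_two]
        have : y = y⁻¹ := by simpa using e3
        nth_rewrite 2 [this]
        exact mul_inv_cancel y
      obtain ⟨j, hj⟩ := pgroup_coprime hQ y 2 (by
        intro hd
        have hd' : p ∣ 2 := by exact_mod_cast hd
        exact hp2 ((Nat.prime_dvd_prime_iff_eq hp Nat.prime_two).1 hd'))
      rw [← hj, e4, one_zpow]
    exact hl.ne' (T1 _ h1)
  refine ⟨hp2, ?_⟩
  by_contra hsr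
  have h1 : a ^ k = 1 := by
    apply resid_eq h
    intro Q _ _ hQ f
    rw [map_one, map_zpow]
    have hnil : Group.IsNilpotent Q := hQ.isNilpotent
    have key : ∀ j : ℕ, f a ^ k ∈ (⊤ : Subgroup Q).lowerCentralSeries j := by
      intro j
      induction j with
      | zero => exact Subgroup.mem_top _
      | succ j ih =>
        have hbj : f b ∈ (⊤ : Subgroup Q).lowerCentralSeries j := by
          rw [fb]
          have := (inferInstance : ((⊤ : Subgroup Q).lowerCentralSeries j).Normal).conj_mem _ ih
            (f t)⁻¹
          rwa [inv_inv] at this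
        have hcomm : ⁅(f b)⁻¹, f a ^ l⁆ ∈ (⊤ : Subgroup Q).lowerCentralSeries (j + 1) :=
          Subgroup.commutator_mem_commutator (inv_mem hbj) (Subgroup.mem_top _)
        rw [commutatorElement_def, inv_inv, finv, ← mul_inv_rev, ← zpow_add] at hcomm
        have h2 := inv_mem hcomm
        rw [inv_inv] at h2
        obtain ⟨q, hq⟩ : ∃ q, s = r' + 1 + q := ⟨s - r' - 1, by omega⟩
        have hkl : k = (l + l) * (p : ℤ) ^ q := by
          rw [hks, hlr, hq, hp2]; push_cast; ring
        have h3 := zpow_mem h2 ((p : ℤ) ^ q)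
        rw [← zpow_mul, ← hkl] at h3
        exact h3
    obtain ⟨n, hn⟩ := Subgroup.nilpotent_iff_lowerCentralSeries.1 hnil
    have h4 := key n
    rw [hn, Subgroup.mem_bot] at h4
    exact h4
  exact hk.ne' (T1 _ h1)

end Necessity


/-- **Theorem 4.** For `|m| ≥ l > 0` and `k > 0`, the group
`H(l,m;k) = ⟨a, t; t⁻¹a⁻ᵏt·aˡ·t⁻¹aᵏt = aᵐ⟩` is residually a finite `p`-group iff
`|m| = l = p^r` and `k = p^s` for some `r, s ≥ 0`, and moreover `p = 2` and `s ≤ r`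
whenever `m = -l`. -/
theorem brunner_residually_p_iff (p : ℕ) (hp : p.Prime) (l m k : ℤ)
    (hl : 0 < l) (hml : l ≤ |m|) (hk : 0 < k) :
    ResiduallyPGroup p (BrunnerGroup l m k) ↔
      ∃ r s : ℕ, |m| = l ∧ l = (p : ℤ) ^ r ∧ k = (p : ℤ) ^ s ∧
        (m = -l → p = 2 ∧ s ≤ r) := by
  have : Fact p.Prime := ⟨hp⟩
  constructor
  · exact brunner_nec l m k hl hml hk
  · rintro ⟨r, s, hm, hlr, hks, hneg⟩
    refine (brunner_suff r s l m k (by rw [hlr]; push_cast; rfl) (by rw [hks]; push_cast; rfl)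
      ?_).residually
    rcases abs_cases m with ⟨h1, -⟩ | ⟨h1, -⟩
    · left; omega
    · right
      have h2 : m = -l := by omega
      exact ⟨h2, hneg h2⟩
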